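/- arXiv:2401.15812 — 2 statements merged into one kernel-verified Lean document; each statement's English description precedes it below -/
import Mathlib

section
/- Let C > 0 be a constant. For every η > 0 there is n_0 such that for all n ≥ n_0 the following holds: for every m ≤ Cn, every deterministic online strategy of Builder for the first m steps, and every realization of e_1, …, e_m for which Y_m ∪ Z_m ≠ ∅ and the maximum degree of G_{n,m} is at most 10·log n, if for each j ≥ m+1 Builder purchases e_j if and only if at least one endpoint of e_j is isolated in B_{j−1}, then the conditional probability (given e_1, …, e_m) that B_{τ_1} has no isolated vertex is at least (1 − η)·|Z_m| / (|Y_m| + |Z_m|). -/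
open Finset Filter

namespace RGP

/-- Number of edges of the complete graph on `n` vertices. -/
def numEdges (n : ℕ) : ℕ := n * (n - 1) / 2

/-- An edge of the complete graph on `Fin n` (an unordered pair of distinct vertices). -/
abbrev EdgeType (n : ℕ) := {e : Sym2 (Fin n) // ¬ e.IsDiag}

/-- A uniformly random permutation of the edges of `K_n` is modelled by a bijection
`σ` between positions `Fin (numEdges n)` and edges; `σ i` is the edge `e_{i+1}`. -/
abbrev Ord (n : ℕ) := Fin (numEdges n) ≃ EdgeType n

/-- Degree of a vertex `v` in a set `S` of edges. -/
def deg {n : ℕ} (S : Finset (Sym2 (Fin n))) (v : Fin n) : ℕ :=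
  (S.filter (fun e => v ∈ e)).card

/-- The edge set `{e_1, …, e_m}` of `G_{n,m}` in the random graph process `σ`. -/
def procEdges {n : ℕ} (σ : Ord n) (m : ℕ) : Finset (Sym2 (Fin n)) :=
  (Finset.univ.filter (fun i : Fin (numEdges n) => (i : ℕ) < m)).image (fun i => (σ i).1)

/-- The hitting time `τ_k` for minimum degree at least `k`. -/
noncomputable def tau {n : ℕ} (k : ℕ) (σ : Ord n) : ℕ :=
  sInf {m | ∀ v : Fin n, k ≤ deg (procEdges σ m) v}

open scoped Classical in
/-- The probability of an event under the uniformly random edge ordering. -/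
noncomputable def Pr {n : ℕ} (p : Ord n → Prop) : ℝ :=
  ((Finset.univ : Finset (Ord n)).filter p).card / (Fintype.card (Ord n) : ℝ)

/-- A deterministic online strategy: given the sequence of edges revealed so far
(the last entry being the edge just revealed), decide whether to purchase it. -/
abbrev Strategy (n : ℕ) := List (Sym2 (Fin n)) → Bool

/-- The list of the first `i` revealed edges `e_1, …, e_i`. -/
def prefixList {n : ℕ} (σ : Ord n) (i : ℕ) : List (Sym2 (Fin n)) :=
  (List.range i).filterMap (fun j => if h : j < numEdges n then some (σ ⟨j, h⟩).1 else none)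

/-- `buy st σ i` is the edge set of Builder's graph `B_i`: the edges purchased by the
strategy `st` among `e_1, …, e_i`. -/
def buy {n : ℕ} (st : Strategy n) (σ : Ord n) : ℕ → Finset (Sym2 (Fin n))
  | 0 => ∅
  | i + 1 =>
    if h : i < numEdges n then
      if st (prefixList σ (i + 1)) then insert (σ ⟨i, h⟩).1 (buy st σ i)
      else buy st σ i
    else buy st σ i

end RGP

namespace RGP

/-- Builder's purchased edge set, as determined by the strategy `st`, after the list `L`
of edges has been revealed (the decision about the `i`-th edge depends on the prefix of
length `i`). -/
def buyList {n : ℕ} (st : Strategy n) (L : List (Sym2 (Fin n))) : Finset (Sym2 (Fin n)) :=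
  ((List.range L.length).filterMap
    (fun i => if st (L.take (i + 1)) then L[i]? else none)).toFinset

/-- Conditional probability of `p` given `q` under the uniformly random edge ordering. -/
noncomputable def CondPr {n : ℕ} (p q : Ord n → Prop) : ℝ :=
  Pr (fun σ => p σ ∧ q σ) / Pr q

end RGP

namespace RGP

set_option linter.unusedSectionVars false
set_option linter.unusedVariables false

/-! ### Beta integrals -/

/-- The (real) beta integral with natural exponents. -/
noncomputable def bt (a b : ℕ) : ℝ := ∫ t in (0:ℝ)..1, t ^ a * (1 - t) ^ b

theorem bt_zero (b : ℕ) : bt 0 b = 1 / ((b : ℝ) + 1) := by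
  unfold bt
  have h := intervalIntegral.integral_comp_sub_left (a := 0) (b := 1) (fun x : ℝ => x ^ b) 1
  simp only [pow_zero, one_mul]
  rw [h]
  simp [integral_pow]

theorem bt_succ (a b : ℕ) : ((b : ℝ) + 1) * bt (a + 1) b = ((a : ℝ) + 1) * bt a (b + 1) := by
  have h := intervalIntegral.integral_mul_deriv_eq_deriv_mul (a := (0:ℝ)) (b := 1)
    (u := fun t : ℝ => t ^ (a + 1)) (u' := fun t => ((a : ℝ) + 1) * t ^ a)
    (v := fun t : ℝ => - (1 - t) ^ (b + 1)) (v' := fun t => ((b : ℝ) + 1) * (1 - t) ^ b)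
    (fun x _ => by
      have := hasDerivAt_pow (a + 1) x
      simpa using this)
    (fun x _ => by
      have h1 : HasDerivAt (fun t : ℝ => 1 - t) (-1) x := by
        simpa using (hasDerivAt_id x).const_sub 1
      have := (h1.pow (b + 1)).neg
      have e : ((b : ℝ) + 1) * (1 - x) ^ b = -(((b + 1 : ℕ) : ℝ) * (1 - x) ^ (b + 1 - 1) * -1) := by
        push_cast
        simp
      rw [e]
      exact this)
    (by apply Continuous.intervalIntegrable; fun_prop)
    (by apply Continuous.intervalIntegrable; fun_prop)
  simp only [sub_self, ne_eq, Nat.add_eq_zero_iff, one_ne_zero, and_false, not_false_eq_true,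
    zero_pow, neg_zero, mul_zero, sub_zero, zero_mul, zero_sub] at h
  unfold bt
  rw [← intervalIntegral.integral_const_mul, ← intervalIntegral.integral_const_mul]
  rw [← intervalIntegral.integral_neg] at h
  convert h using 1 <;> (apply intervalIntegral.integral_congr; intro t _; simp only; ring)

theorem bt_eq (a : ℕ) : ∀ b : ℕ, ((a + b + 1).factorial : ℝ) * bt a b = a.factorial * b.factorial := by
  induction a with
  | zero =>
    intro b
    rw [bt_zero, zero_add, Nat.factorial_succ]
    have : (b : ℝ) + 1 ≠ 0 := by positivity
    push_cast
    field_simp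
    simp
  | succ a ih =>
    intro b
    have h1 := bt_succ a b
    have h2 := ih (b + 1)
    have : (b : ℝ) + 1 ≠ 0 := by positivity
    apply mul_left_cancel₀ this
    have e : a + 1 + b + 1 = a + (b + 1) + 1 := by ring
    rw [e]
    calc ((b : ℝ) + 1) * (((a + (b + 1) + 1).factorial : ℝ) * bt (a + 1) b)
        = ((a + (b + 1) + 1).factorial : ℝ) * (((b : ℝ) + 1) * bt (a + 1) b) := by ring
      _ = ((a : ℝ) + 1) * (((a + (b + 1) + 1).factorial : ℝ) * bt a (b + 1)) := by rw [h1]; ring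
      _ = _ := by rw [h2]; push_cast [Nat.factorial_succ]; ring

theorem bt_nonneg (a b : ℕ) : 0 ≤ bt a b := by
  have h := bt_eq a b
  have h1 : (0 : ℝ) < ((a + b + 1).factorial : ℝ) := by positivity
  have h2 : (0 : ℝ) ≤ (a.factorial : ℝ) * b.factorial := by positivity
  rw [← h] at h2
  exact nonneg_of_mul_nonneg_right h2 h1

theorem bt_choose (r k : ℕ) (hk : k < r) :
    ((r.choose k * (r - k) : ℕ) : ℝ) * bt k (r - 1 - k) = 1 := by
  obtain ⟨b, rfl⟩ : ∃ b, r = k + b + 1 := ⟨r - 1 - k, by omega⟩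
  have h := bt_eq k b
  have e1 : k + b + 1 - 1 - k = b := by omega
  have e2 : k + b + 1 - k = b + 1 := by omega
  rw [e1, e2]
  have h3 := Nat.choose_mul_factorial_mul_factorial (n := k + b + 1) (k := k) (by omega)
  rw [e2, Nat.factorial_succ] at h3
  have h4 : (((k + b + 1).choose k * (b + 1) : ℕ) : ℝ) * (k.factorial * b.factorial)
      = ((k + b + 1).factorial : ℝ) := by
    rw [← h3]; push_cast; ring
  have h5 : ((k + b + 1).factorial : ℝ) ≠ 0 := by positivity
  apply mul_left_cancel₀ h5
  calc _ = (((k + b + 1).choose k * (b + 1) : ℕ) : ℝ) * (((k + b + 1).factorial : ℝ) * bt k b) := by ring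
    _ = _ := by rw [h, h4, mul_one]

/-! ### Random subsets -/
section Rand
variable {E : Type*} [DecidableEq E]

/-- weight of a set -/
noncomputable def wt (q : ℕ) (t : ℝ) (k : ℕ) : ℝ := t ^ k * (1 - t) ^ (q - k)

open scoped Classical in
/-- probability that a `t`-random subset of `Q` satisfies `p`. -/
noncomputable def Pt (Q : Finset E) (t : ℝ) (p : Finset E → Prop) : ℝ :=
  ∑ F ∈ Q.powerset, if p F then wt (#Q) t (#F) else 0

theorem wt_nonneg {q k : ℕ} {t : ℝ} (h0 : 0 ≤ t) (h1 : t ≤ 1) : 0 ≤ wt q t k := by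
  unfold wt
  have : 0 ≤ 1 - t := by linarith
  positivity

theorem Pt_true (Q : Finset E) (t : ℝ) : Pt Q t (fun _ => True) = 1 := by
  unfold Pt wt
  simp only [if_true]
  rw [Finset.sum_pow_mul_eq_add_pow]
  simp

theorem Pt_mono {Q : Finset E} {t : ℝ} (h0 : 0 ≤ t) (h1 : t ≤ 1) {p q : Finset E → Prop}
    (h : ∀ F, F ⊆ Q → p F → q F) : Pt Q t p ≤ Pt Q t q := by
  classical
  unfold Pt
  apply Finset.sum_le_sum
  intro F hF
  have := @wt_nonneg (#Q) (#F) t h0 h1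
  have h2 := h F (mem_powerset.1 hF)
  by_cases hp : p F
  · simp [hp, h2 hp]
  · by_cases hq : q F <;> simp [hp, hq, this]

theorem Pt_nonneg {Q : Finset E} {t : ℝ} (h0 : 0 ≤ t) (h1 : t ≤ 1) {p : Finset E → Prop} :
    0 ≤ Pt Q t p := by
  classical
  unfold Pt
  apply Finset.sum_nonneg
  intro F hF
  have := @wt_nonneg (#Q) (#F) t h0 h1
  split_ifs <;> simp [this]

theorem Pt_le_one {Q : Finset E} {t : ℝ} (h0 : 0 ≤ t) (h1 : t ≤ 1) {p : Finset E → Prop} :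
    Pt Q t p ≤ 1 := by
  rw [← Pt_true Q t]
  exact Pt_mono h0 h1 (fun _ _ _ => trivial)

theorem Pt_not (Q : Finset E) (t : ℝ) (p : Finset E → Prop) :
    Pt Q t (fun F => ¬ p F) = 1 - Pt Q t p := by
  classical
  rw [eq_sub_iff_add_eq, ← Pt_true Q t]
  unfold Pt
  rw [← Finset.sum_add_distrib]
  apply Finset.sum_congr rfl
  intro F _
  by_cases hp : p F <;> simp [hp]

theorem Pt_union {ι : Type*} {Q : Finset E} {t : ℝ} (h0 : 0 ≤ t) (h1 : t ≤ 1)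
    (D : Finset ι) (p : ι → Finset E → Prop) :
    Pt Q t (fun F => ∃ i ∈ D, p i F) ≤ ∑ i ∈ D, Pt Q t (p i) := by
  classical
  unfold Pt
  rw [Finset.sum_comm]
  apply Finset.sum_le_sum
  intro F hF
  have := @wt_nonneg (#Q) (#F) t h0 h1
  have h2 : ∀ i ∈ D, 0 ≤ (if p i F then wt (#Q) t (#F) else 0) := by
    intro i _
    split_ifs <;> simp [this]
  split_ifs with h
  · obtain ⟨i, hi, hp⟩ := h
    have := Finset.single_le_sum h2 hi
    simpa [hp] using this
  · exact Finset.sum_nonneg h2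

theorem Pt_harris [Fintype E] {Q : Finset E} {t : ℝ} (h0 : 0 ≤ t) (h1 : t ≤ 1)
    {p q : Finset E → Prop}
    (hp : ∀ F F', F ⊆ F' → p F → p F') (hq : ∀ F F', F ⊆ F' → q F → q F') :
    Pt Q t p * Pt Q t q ≤ Pt Q t (fun F => p F ∧ q F) := by
  classical
  let μ : Finset E → ℝ := fun F => if F ⊆ Q then wt (#Q) t (#F) else 0
  have key : ∀ p : Finset E → Prop, Pt Q t p = ∑ F, μ F * (if p F then 1 else 0) := by
    intro p
    unfold Pt
    rw [← Finset.sum_subset (Finset.subset_univ Q.powerset)]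
    · apply Finset.sum_congr rfl
      intro F hF
      simp only [μ, mem_powerset.1 hF, if_true]
      split_ifs <;> simp
    · intro F _ hF
      rw [mem_powerset] at hF
      simp [μ, hF]
  have hμ0 : 0 ≤ μ := by
    intro F
    simp only [μ, Pi.zero_apply]
    split_ifs
    · exact wt_nonneg h0 h1
    · exact le_rfl
  have hmono : ∀ p : Finset E → Prop, (∀ F F', F ⊆ F' → p F → p F') →
      Monotone (fun F => if p F then (1:ℝ) else 0) := by
    intro p hp F F' hFF
    by_cases h : p F
    · simp [h, hp F F' hFF h]
    · simp only [h, if_false]; split_ifs <;> norm_num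
  have hnn : ∀ p : Finset E → Prop, (0 : Finset E → ℝ) ≤ (fun F => if p F then (1:ℝ) else 0) := by
    intro p F
    simp only [Pi.zero_apply]
    split_ifs <;> norm_num
  have h := fkg (μ := μ) (f := fun F => if p F then (1:ℝ) else 0)
    (g := fun F => if q F then (1:ℝ) else 0) hμ0 (hnn p) (hnn q) (hmono p hp) (hmono q hq) (by
      intro a b
      simp only [μ]
      by_cases ha : a ⊆ Q
      · by_cases hb : b ⊆ Q
        · have hab : a ⊓ b ⊆ Q := fun x hx => ha (Finset.mem_inter.1 hx).1
          have hab' : a ⊔ b ⊆ Q := Finset.union_subset ha hb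
          simp only [ha, hb, hab, hab', if_true]
          have hc := Finset.card_union_add_card_inter a b
          have ca := Finset.card_le_card ha
          have cb := Finset.card_le_card hb
          have ci := Finset.card_le_card hab
          have cu := Finset.card_le_card hab'
          simp only [Finset.inf_eq_inter, Finset.sup_eq_union] at *
          unfold wt
          apply le_of_eq
          have e1 : t ^ #a * (1 - t) ^ (#Q - #a) * (t ^ #b * (1 - t) ^ (#Q - #b))
             = t ^ (#a + #b) * (1 - t) ^ ((#Q - #a) + (#Q - #b)) := by
            rw [pow_add, pow_add]; ring
          have e2 : t ^ #(a ∩ b) * (1 - t) ^ (#Q - #(a ∩ b)) * (t ^ #(a ∪ b) * (1 - t) ^ (#Q - #(a ∪ b)))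
             = t ^ (#(a ∩ b) + #(a ∪ b)) * (1 - t) ^ ((#Q - #(a ∩ b)) + (#Q - #(a ∪ b))) := by
            rw [pow_add, pow_add]; ring
          rw [e1, e2]
          congr 2 <;> omega
        · simp only [hb, if_false, mul_zero]
          exact mul_nonneg (hμ0 _) (hμ0 _)
      · simp only [ha, if_false, zero_mul]
        exact mul_nonneg (hμ0 _) (hμ0 _))
  have h1' : ∑ F, μ F = 1 := by
    have := key (fun _ => True)
    rw [Pt_true] at this
    simpa using this.symm
  rw [h1', one_mul] at h
  rw [key, key, key]
  refine h.trans (le_of_eq ?_)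
  apply Finset.sum_congr rfl
  intro F _
  by_cases hp : p F <;> by_cases hq : q F <;> simp [hp, hq]

theorem Pt_mem {Q : Finset E} {t : ℝ} (f : E) (hf : f ∈ Q) (p : Finset E → Prop) :
    Pt Q t (fun F => f ∈ F ∧ p (F.erase f)) = t * Pt Q t (fun F => p (F.erase f)) := by
  classical
  obtain ⟨Q', hQ', rfl⟩ : ∃ Q', f ∉ Q' ∧ Q = insert f Q' :=
    ⟨Q.erase f, by simp, (Finset.insert_erase hf).symm⟩
  unfold Pt
  rw [Finset.sum_powerset_insert hQ', Finset.sum_powerset_insert hQ', mul_add, Finset.mul_sum,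
    Finset.mul_sum, ← Finset.sum_add_distrib, ← Finset.sum_add_distrib]
  apply Finset.sum_congr rfl
  intro F hF
  have hF' := mem_powerset.1 hF
  have hfF : f ∉ F := fun h => hQ' (hF' h)
  simp only []
  rw [Finset.card_insert_of_notMem hQ', Finset.card_insert_of_notMem hfF]
  simp only [Finset.erase_insert hfF, Finset.erase_eq_of_notMem hfF]
  have hc := Finset.card_le_card hF'
  simp only [hfF, false_and, if_false, mem_insert_self, true_and, zero_add]
  split_ifs
  · unfold wt
    have e1 : #Q' + 1 - (#F + 1) = #Q' - #F := by omega
    have e2 : #Q' + 1 - #F = #Q' - #F + 1 := by omega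
    rw [e1, e2]
    ring
  · simp

theorem Pt_mem_le {Q : Finset E} {t : ℝ} (h0 : 0 ≤ t) (h1 : t ≤ 1) (f : E) (hf : f ∈ Q)
    (p : Finset E → Prop) (hp : ∀ F F', F ⊆ F' → p F → p F') :
    Pt Q t (fun F => f ∈ F ∧ p (F.erase f)) ≤ t * Pt Q t p := by
  rw [Pt_mem f hf]
  apply mul_le_mul_of_nonneg_left _ h0
  exact Pt_mono h0 h1 (fun F _ h => hp _ _ (Finset.erase_subset _ _) h)

theorem Pt_disj {Q S : Finset E} {t : ℝ} (hS : S ⊆ Q) :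
    Pt Q t (fun F => ¬ ∃ e ∈ F, e ∈ S) = (1 - t) ^ #S := by
  classical
  have h := Pt_true (Q \ S) t
  unfold Pt at h ⊢
  rw [← Finset.sum_subset (Finset.powerset_mono.2 (Finset.sdiff_subset (s := Q) (t := S)))]
  · have hc := Finset.card_sdiff_add_card_eq_card hS
    calc _ = ∑ F ∈ (Q \ S).powerset, (1 - t) ^ #S * (if True then wt (#(Q \ S)) t (#F) else 0) := by
            apply Finset.sum_congr rfl
            intro F hF
            have hF' := mem_powerset.1 hF
            have : ¬ ∃ e ∈ F, e ∈ S := by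
              rintro ⟨e, he, heS⟩
              exact (Finset.mem_sdiff.1 (hF' he)).2 heS
            simp only [this, not_false_eq_true, if_true]
            have hc2 := Finset.card_le_card hF'
            unfold wt
            have : #Q - #F = #S + (#(Q \ S) - #F) := by omega
            rw [this, pow_add]
            ring
      _ = _ := by rw [← Finset.mul_sum]; simp only [if_true] at h ⊢; rw [h, mul_one]
  · intro F hF hF'
    rw [mem_powerset] at hF hF'
    have : ∃ e ∈ F, e ∈ S := by
      by_contra hcon
      apply hF'
      intro e he
      rw [Finset.mem_sdiff]
      exact ⟨hF he, fun h => hcon ⟨e, he, h⟩⟩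
    simp [this]

theorem pow_bern (t : ℝ) (h0 : 0 ≤ t) (h1 : t ≤ 1) (k : ℕ) : (1 - t) ^ k * (1 + k * t) ≤ 1 := by
  have h := one_add_mul_le_pow (a := t) (by linarith) k
  have h2 : 0 ≤ (1 - t) ^ k := pow_nonneg (by linarith) k
  calc (1 - t) ^ k * (1 + k * t) ≤ (1 - t) ^ k * (1 + t) ^ k := mul_le_mul_of_nonneg_left h h2
    _ = (1 - t ^ 2) ^ k := by rw [← mul_pow]; ring_nf
    _ ≤ 1 := pow_le_one₀ (by nlinarith) (by nlinarith)

theorem Pt_touch {Q S : Finset E} {t : ℝ} (h0 : 0 ≤ t) (h1 : t ≤ 1) (hS : S ⊆ Q) {h : ℝ}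
    (hh0 : 0 ≤ h) (hh : h ≤ #S) :
    h * t ≤ (1 + h * t) * Pt Q t (fun F => ∃ e ∈ F, e ∈ S) := by
  have e := Pt_disj (t := t) hS
  rw [Pt_not] at e
  have hb := pow_bern t h0 h1 (#S)
  have hx : 0 ≤ (1 - t) ^ #S := pow_nonneg (by linarith) _
  have h3 : (1 - t) ^ #S * (1 + h * t) ≤ 1 := by
    refine le_trans (mul_le_mul_of_nonneg_left ?_ hx) hb
    nlinarith
  have e' : Pt Q t (fun F => ∃ e ∈ F, e ∈ S) = 1 - (1 - t) ^ #S := by linarith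
  rw [e']
  nlinarith

end Rand

/-! ### Covering -/

/-- every vertex of `A` is touched by an edge of `F` -/
def cov {n : ℕ} (F : Finset (EdgeType n)) (A : Finset (Fin n)) : Prop :=
  ∀ a ∈ A, ∃ e ∈ F, a ∈ e.1

theorem cov_mono {n : ℕ} {A : Finset (Fin n)} (F F' : Finset (EdgeType n)) (h : F ⊆ F')
    (hc : cov F A) : cov F' A := fun a ha => by
  obtain ⟨e, he, hae⟩ := hc a ha
  exact ⟨e, h he, hae⟩

theorem key_pt {n : ℕ} {Q D : Finset (EdgeType n)} {A : Finset (Fin n)} {t h : ℝ}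
    (h0 : 0 ≤ t) (h1 : t ≤ 1) (hh : 0 ≤ h) (hD : D ⊆ Q)
    (hdeg : ∀ f ∈ D, ∀ v ∈ f.1, h ≤ #(Q.filter (fun e => v ∈ e.1))) :
    Pt Q t (fun F => cov F A ∧ ∃ f ∈ D, f ∈ F) * (h ^ 2 * t) ≤
      #D * (1 + h * t) ^ 2 * Pt Q t (fun F => cov F A) := by
  have hu : Pt Q t (fun F => cov F A ∧ ∃ f ∈ D, f ∈ F) ≤
      ∑ f ∈ D, Pt Q t (fun F => f ∈ F ∧ cov F A) := by
    refine le_trans (Pt_mono h0 h1 ?_) (Pt_union h0 h1 D (fun f F => f ∈ F ∧ cov F A))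
    rintro F _ ⟨hc, f, hf, hfF⟩
    exact ⟨f, hf, hfF, hc⟩
  have hs : ∀ f ∈ D, Pt Q t (fun F => f ∈ F ∧ cov F A) * (h ^ 2 * t) ≤
      (1 + h * t) ^ 2 * Pt Q t (fun F => cov F A) := by
    intro f hf
    obtain ⟨z, w, hzw⟩ : ∃ z w, f.1 = s(z, w) := by
      induction f.1 using Sym2.ind with
      | _ z w => exact ⟨z, w, rfl⟩
    have hz := hdeg f hf z (by rw [hzw]; simp)
    have hw := hdeg f hf w (by rw [hzw]; simp)
    let A' := A.filter (fun a => a ∉ f.1)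
    have s1 : Pt Q t (fun F => f ∈ F ∧ cov F A) ≤ t * Pt Q t (fun F => cov F A') := by
      refine le_trans (Pt_mono h0 h1 ?_)
        (Pt_mem_le h0 h1 f (hD hf) (fun F => cov F A') (fun F F' => cov_mono F F'))
      rintro F _ ⟨hfF, hc⟩
      refine ⟨hfF, fun a ha => ?_⟩
      obtain ⟨ha, haf⟩ := Finset.mem_filter.1 ha
      obtain ⟨e, he, hae⟩ := hc a ha
      refine ⟨e, Finset.mem_erase.2 ⟨?_, he⟩, hae⟩
      rintro rfl
      exact haf hae
    obtain ⟨Sz, hSz⟩ : ∃ S, S = Q.filter (fun e => z ∈ e.1) := ⟨_, rfl⟩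
    obtain ⟨Sw, hSw⟩ : ∃ S, S = Q.filter (fun e => w ∈ e.1) := ⟨_, rfl⟩
    rw [← hSz] at hz
    rw [← hSw] at hw
    have hSzQ : Sz ⊆ Q := by rw [hSz]; exact Finset.filter_subset _ _
    have hSwQ : Sw ⊆ Q := by rw [hSw]; exact Finset.filter_subset _ _
    have hSz' : ∀ e ∈ Sz, z ∈ e.1 := by
      intro e he
      rw [hSz] at he
      exact (Finset.mem_filter.1 he).2
    have hSw' : ∀ e ∈ Sw, w ∈ e.1 := by
      intro e he
      rw [hSw] at he
      exact (Finset.mem_filter.1 he).2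
    clear hSz hSw
    have tz := Pt_touch h0 h1 hSzQ hh hz
    have tw := Pt_touch h0 h1 hSwQ hh hw
    set Pz := Pt Q t (fun F => ∃ e ∈ F, e ∈ Sz) with hPz
    set Pw := Pt Q t (fun F => ∃ e ∈ F, e ∈ Sw) with hPw
    have mono : ∀ S : Finset (EdgeType n), ∀ F F' : Finset (EdgeType n), F ⊆ F' →
        (∃ e ∈ F, e ∈ S) → (∃ e ∈ F', e ∈ S) := by
      rintro v F F' hFF ⟨e, he, h⟩
      exact ⟨e, hFF he, h⟩
    have hzw2 : Pz * Pw ≤ Pt Q t (fun F => (∃ e ∈ F, e ∈ Sz) ∧ (∃ e ∈ F, e ∈ Sw)) :=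
      Pt_harris h0 h1 (mono Sz) (mono Sw)
    have hA := Pt_harris (Q := Q) h0 h1
      (p := fun F => cov F A')
      (q := fun F => (∃ e ∈ F, e ∈ Sz) ∧ (∃ e ∈ F, e ∈ Sw))
      (fun F F' => cov_mono F F')
      (fun F F' hFF hp => ⟨mono Sz F F' hFF hp.1, mono Sw F F' hFF hp.2⟩)
    have hA2 := hA.trans (Pt_mono (q := fun F => cov F A) h0 h1 (by
      rintro F _ ⟨hc, ⟨e, he, hez⟩, ⟨e', he', hew⟩⟩ a ha
      by_cases haf : a ∈ f.1
      · rw [hzw, Sym2.mem_iff] at haf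
        rcases haf with rfl | rfl
        · exact ⟨e, he, hSz' e hez⟩
        · exact ⟨e', he', hSw' e' hew⟩
      · exact hc a (Finset.mem_filter.2 ⟨ha, haf⟩)))
    have p0 : 0 ≤ Pt Q t (fun F => cov F A') := Pt_nonneg h0 h1
    set p := Pt Q t (fun F => cov F A')
    have hpp : p * (Pz * Pw) ≤ Pt Q t (fun F => cov F A) :=
      (mul_le_mul_of_nonneg_left hzw2 p0).trans hA2
    have hht : 0 ≤ h * t := mul_nonneg hh h0
    have hsq : (h * t) * (h * t) ≤ ((1 + h * t) * Pz) * ((1 + h * t) * Pw) :=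
      mul_le_mul tz tw hht (hht.trans tz)
    calc _ ≤ (t * p) * (h ^ 2 * t) := mul_le_mul_of_nonneg_right s1 (by positivity)
      _ = p * ((h * t) * (h * t)) := by ring
      _ ≤ p * (((1 + h * t) * Pz) * ((1 + h * t) * Pw)) := mul_le_mul_of_nonneg_left hsq p0
      _ = (1 + h * t) ^ 2 * (p * (Pz * Pw)) := by ring
      _ ≤ _ := mul_le_mul_of_nonneg_left hpp (by positivity)
  calc _ ≤ (∑ f ∈ D, Pt Q t (fun F => f ∈ F ∧ cov F A)) * (h ^ 2 * t) :=
        mul_le_mul_of_nonneg_right hu (by positivity)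
    _ = ∑ f ∈ D, Pt Q t (fun F => f ∈ F ∧ cov F A) * (h ^ 2 * t) := by rw [Finset.sum_mul]
    _ ≤ ∑ f ∈ D, (1 + h * t) ^ 2 * Pt Q t (fun F => cov F A) := Finset.sum_le_sum hs
    _ = _ := by rw [Finset.sum_const, nsmul_eq_mul]; ring

theorem bad_le {E : Type*} [DecidableEq E] {Q D : Finset E} {t : ℝ} (h0 : 0 ≤ t) (h1 : t ≤ 1)
    (hD : D ⊆ Q) (p : Finset E → Prop) :
    Pt Q t (fun F => p F ∧ ∃ f ∈ D, f ∈ F) ≤ #D * t := by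
  have hu : Pt Q t (fun F => p F ∧ ∃ f ∈ D, f ∈ F) ≤
      ∑ f ∈ D, Pt Q t (fun F => f ∈ F) := by
    refine le_trans (Pt_mono h0 h1 ?_) (Pt_union h0 h1 D (fun f F => f ∈ F))
    rintro F _ ⟨hc, f, hf, hfF⟩
    exact ⟨f, hf, hfF⟩
  refine hu.trans ?_
  rw [← nsmul_eq_mul, ← Finset.sum_const]
  apply Finset.sum_le_sum
  intro f hf
  have := Pt_mem_le h0 h1 f (hD hf) (fun _ => True) (fun _ _ _ _ => trivial)
  rw [Pt_true] at this
  simpa using this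

theorem sum_bt {E : Type*} [DecidableEq E] (Q : Finset E) (d : ℕ) (hd : 1 ≤ d)
    (p : Finset E → Prop) [DecidablePred p] :
    (∑ F ∈ Q.powerset, if p F then bt (#F) (#Q + d - 1 - #F) else 0) =
      ∫ t in (0:ℝ)..1, (1 - t) ^ (d - 1) * Pt Q t p := by
  unfold Pt
  simp_rw [Finset.mul_sum]
  rw [intervalIntegral.integral_finsetSum]
  · apply Finset.sum_congr rfl
    intro F hF
    have hc := Finset.card_le_card (mem_powerset.1 hF)
    by_cases hp : p F
    · simp only [hp, if_true]
      unfold bt wt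
      apply intervalIntegral.integral_congr
      intro t _
      have : #Q + d - 1 - #F = (d - 1) + (#Q - #F) := by omega
      simp only [this, pow_add]
      ring
    · simp [hp]
  · intro F _
    apply Continuous.intervalIntegrable
    split_ifs
    · unfold wt; fun_prop
    · fun_prop

theorem Pt_cont {E : Type*} [DecidableEq E] (Q : Finset E) (p : Finset E → Prop) :
    Continuous (fun t => Pt Q t p) := by
  classical
  unfold Pt wt
  apply continuous_finsetSum
  intro F _
  split_ifs <;> fun_prop

open scoped Classical in
theorem key_int {n : ℕ} {Q D : Finset (EdgeType n)} {A : Finset (Fin n)} {h s s' η' l : ℝ} {d : ℕ}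
    (hd : 1 ≤ d) (hh : 0 < h) (hD : D ⊆ Q)
    (hdeg : ∀ f ∈ D, ∀ v ∈ f.1, h ≤ #(Q.filter (fun e => v ∈ e.1)))
    (hl : (#D : ℝ) ≤ l) (hs : 0 < s) (hs' : 0 < s') (hη : 0 ≤ η')
    (hcond : ∀ t : ℝ, s ≤ t → t ≤ s' → l * (1 + h * t) ^ 2 ≤ η' * (h ^ 2 * t)) :
    (∑ F ∈ Q.powerset, if cov F A ∧ ∃ f ∈ D, f ∈ F then bt (#F) (#Q + d - 1 - #F) else 0) ≤
    η' * (∑ F ∈ Q.powerset, if cov F A then bt (#F) (#Q + d - 1 - #F) else 0) +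
      l * (s / d + 2 / (s' * d ^ 3)) := by
  have hl0 : 0 ≤ l := le_trans (by positivity) hl
  have hpt : ∀ t ∈ Set.Icc (0:ℝ) 1, (1 - t) ^ (d - 1) * Pt Q t (fun F => cov F A ∧ ∃ f ∈ D, f ∈ F)
      ≤ η' * ((1 - t) ^ (d - 1) * Pt Q t (fun F => cov F A)) +
        ((l * s) * (t ^ 0 * (1 - t) ^ (d - 1)) + (l / s') * (t ^ 2 * (1 - t) ^ (d - 1))) := by
    rintro t ⟨h0, h1⟩
    have hx : 0 ≤ (1 - t) ^ (d - 1) := pow_nonneg (by linarith) _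
    have c0 : 0 ≤ Pt Q t (fun F => cov F A) := Pt_nonneg h0 h1
    have main : Pt Q t (fun F => cov F A ∧ ∃ f ∈ D, f ∈ F) ≤
        η' * Pt Q t (fun F => cov F A) + (l * s + (l / s') * t ^ 2) := by
      have b1 := bad_le h0 h1 hD (fun F => cov F A)
      have b1' : Pt Q t (fun F => cov F A ∧ ∃ f ∈ D, f ∈ F) ≤ l * t :=
        b1.trans (mul_le_mul_of_nonneg_right hl h0)
      have n1 : 0 ≤ l * s := by positivity
      have n2 : 0 ≤ (l / s') * t ^ 2 := by positivity
      have n3 : 0 ≤ η' * Pt Q t (fun F => cov F A) := by positivity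
      rcases lt_or_ge t s with hts | hts
      · have : l * t ≤ l * s := mul_le_mul_of_nonneg_left hts.le hl0
        linarith
      · rcases lt_or_ge s' t with hts' | hts'
        · have : l * t ≤ (l / s') * t ^ 2 := by
            rw [div_mul_eq_mul_div, le_div_iff₀ hs']
            have : l * t * s' ≤ l * t * t := mul_le_mul_of_nonneg_left hts'.le (by positivity)
            nlinarith
          linarith
        · have k := key_pt (A := A) h0 h1 hh.le hD hdeg
          have hc := hcond t hts hts'
          have htp : 0 < t := lt_of_lt_of_le hs hts
          have hpos : 0 < h ^ 2 * t := by positivity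
          have k2 : Pt Q t (fun F => cov F A ∧ ∃ f ∈ D, f ∈ F) * (h ^ 2 * t) ≤
              (η' * Pt Q t (fun F => cov F A)) * (h ^ 2 * t) := by
            calc _ ≤ _ := k
              _ ≤ l * (1 + h * t) ^ 2 * Pt Q t (fun F => cov F A) := by gcongr
              _ ≤ η' * (h ^ 2 * t) * Pt Q t (fun F => cov F A) := by gcongr
              _ = _ := by ring
          have := le_of_mul_le_mul_right k2 hpos
          linarith
    calc _ ≤ (1 - t) ^ (d - 1) * (η' * Pt Q t (fun F => cov F A) + (l * s + (l / s') * t ^ 2)) :=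
          mul_le_mul_of_nonneg_left main hx
      _ = _ := by ring
  rw [sum_bt Q d hd (fun F => cov F A ∧ ∃ f ∈ D, f ∈ F), sum_bt Q d hd (fun F => cov F A)]
  have c1 := Pt_cont Q (fun F => cov F A ∧ ∃ f ∈ D, f ∈ F)
  have c2 := Pt_cont Q (fun F => cov F A)
  have hint := intervalIntegral.integral_mono_on (a := 0) (b := 1) (μ := MeasureTheory.volume)
    zero_le_one
    (f := fun t => (1 - t) ^ (d - 1) * Pt Q t (fun F => cov F A ∧ ∃ f ∈ D, f ∈ F))
    (g := fun t => η' * ((1 - t) ^ (d - 1) * Pt Q t (fun F => cov F A)) +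
        ((l * s) * (t ^ 0 * (1 - t) ^ (d - 1)) + (l / s') * (t ^ 2 * (1 - t) ^ (d - 1))))
    (by apply Continuous.intervalIntegrable; fun_prop)
    (by apply Continuous.intervalIntegrable; fun_prop) hpt
  refine hint.trans ?_
  rw [intervalIntegral.integral_add (by apply Continuous.intervalIntegrable; fun_prop)
    (by apply Continuous.intervalIntegrable; fun_prop),
    intervalIntegral.integral_add (by apply Continuous.intervalIntegrable; fun_prop)
    (by apply Continuous.intervalIntegrable; fun_prop),
    intervalIntegral.integral_const_mul, intervalIntegral.integral_const_mul,
    intervalIntegral.integral_const_mul]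
  have e0 : ∫ t in (0:ℝ)..1, t ^ 0 * (1 - t) ^ (d - 1) = bt 0 (d - 1) := rfl
  have e2 : ∫ t in (0:ℝ)..1, t ^ 2 * (1 - t) ^ (d - 1) = bt 2 (d - 1) := rfl
  rw [e0, e2]
  have hdd : ((d - 1 : ℕ) : ℝ) + 1 = d := by
    rw [Nat.cast_sub hd]; simp
  have hdpos : (0:ℝ) < d := by exact_mod_cast hd
  have f0 : bt 0 (d - 1) = 1 / d := by rw [bt_zero, hdd]
  have f2 : bt 2 (d - 1) ≤ 2 / d ^ 3 := by
    have h1 := bt_succ 1 (d - 1)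
    have h2 := bt_succ 0 (d - 1 + 1)
    have h3 := bt_zero (d - 1 + 1 + 1)
    have ee : d - 1 + 1 = d := by omega
    rw [hdd] at h1
    rw [ee] at h1 h2 h3
    rw [h3] at h2
    push_cast at h1 h2
    rw [le_div_iff₀ (by positivity)]
    have h4 : bt (1) d ≤ 1 / d ^ 2 := by
      rw [le_div_iff₀ (by positivity)]
      have : (d : ℝ) + 1 + 1 ≠ 0 := by positivity
      have h5 : ((d : ℝ) + 1) * bt 1 d * (d + 1 + 1) = 1 := by
        have : bt (0 + 1) d = bt 1 d := rfl
        rw [← this, h2]; field_simp; simp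
      have := bt_nonneg 1 d
      nlinarith [mul_nonneg this hdpos.le]
    have e1 : bt (1 + 1) (d - 1) = bt 2 (d - 1) := rfl
    rw [e1] at h1
    rw [le_div_iff₀ (by positivity)] at h4
    calc bt 2 (d - 1) * (d : ℝ) ^ 3 = (d * bt 2 (d - 1)) * d ^ 2 := by ring
      _ = 2 * (bt 1 d * d ^ 2) := by rw [h1]; ring
      _ ≤ 2 := by linarith
  rw [f0]
  have : (l / s') * bt 2 (d - 1) ≤ (l / s') * (2 / d ^ 3) :=
    mul_le_mul_of_nonneg_left f2 (by positivity)
  have e : l * (s / d + 2 / (s' * d ^ 3)) = l * s * (1 / d) + (l / s') * (2 / d ^ 3) := by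
    field_simp
  rw [e]
  linarith

/-! ### The edge map induced by a transposition of two vertices -/

/-- swap vertices `y`, `z` in an edge -/
def swE {n : ℕ} (y z : Fin n) (e : EdgeType n) : EdgeType n :=
  ⟨Sym2.map (Equiv.swap y z) e.1, by
    have := e.2
    rwa [Sym2.isDiag_map (Equiv.swap y z).injective]⟩

theorem mem_swE {n : ℕ} (y z v : Fin n) (e : EdgeType n) :
    v ∈ (swE y z e).1 ↔ Equiv.swap y z v ∈ e.1 := by
  unfold swE
  simp only [Sym2.mem_map]
  constructor
  · rintro ⟨a, ha, rfl⟩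
    simpa using ha
  · intro h
    exact ⟨_, h, by simp⟩

theorem swE_swE {n : ℕ} (y z : Fin n) (e : EdgeType n) : swE y z (swE y z e) = e := by
  apply Subtype.ext
  apply Sym2.ext
  intro v
  rw [mem_swE, mem_swE]
  simp

theorem swE_inj {n : ℕ} (y z : Fin n) : Function.Injective (swE y z) :=
  Function.LeftInverse.injective (swE_swE y z)

theorem swE_eq {n : ℕ} {y z : Fin n} {e : EdgeType n} (hy : y ∉ e.1) (hz : z ∉ e.1) :
    swE y z e = e := by
  apply Subtype.ext
  apply Sym2.ext
  intro v
  rw [mem_swE]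
  by_cases h1 : v = y
  · subst h1; simp [hy, hz]
  · by_cases h2 : v = z
    · subst h2; simp [hy, hz]
    · rw [Equiv.swap_apply_of_ne_of_ne h1 h2]

/-! ### Critical pairs -/

/-- vertices of `U` not touched by `F` -/
def unc {n : ℕ} (U : Finset (Fin n)) (F : Finset (EdgeType n)) : Finset (Fin n) :=
  U.filter (fun v => ∀ e ∈ F, v ∉ e.1)

theorem mem_unc {n : ℕ} {U : Finset (Fin n)} {F : Finset (EdgeType n)} {v : Fin n} :
    v ∈ unc U F ↔ v ∈ U ∧ ∀ e ∈ F, v ∉ e.1 := by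
  simp [unc]

/-- `F` does not cover `U` but `insert e F` does -/
def isCrit {n : ℕ} (U : Finset (Fin n)) (F : Finset (EdgeType n)) (e : EdgeType n) : Prop :=
  e ∉ F ∧ (unc U F).Nonempty ∧ unc U (insert e F) = ∅

theorem unc_insert {n : ℕ} {U : Finset (Fin n)} {F : Finset (EdgeType n)} {e : EdgeType n} :
    unc U (insert e F) = ∅ ↔ ∀ v ∈ unc U F, v ∈ e.1 := by
  rw [Finset.eq_empty_iff_forall_notMem]
  constructor
  · intro h v hv
    by_contra hve
    apply h v
    rw [mem_unc] at hv ⊢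
    refine ⟨hv.1, fun e' he' => ?_⟩
    rcases Finset.mem_insert.1 he' with rfl | h'
    · exact hve
    · exact hv.2 _ h'
  · intro h v hv
    rw [mem_unc] at hv
    exact hv.2 e (by simp) (h v (mem_unc.2 ⟨hv.1, fun e' he' => hv.2 e' (by simp [he'])⟩))

open scoped Classical in
/-- All critical pairs in `R`. -/
noncomputable def critP {n : ℕ} (R : Finset (EdgeType n)) (U : Finset (Fin n)) :
    Finset (Finset (EdgeType n) × EdgeType n) :=
  (R.powerset ×ˢ R).filter (fun p => isCrit U p.1 p.2)

theorem mem_critP {n : ℕ} {R : Finset (EdgeType n)} {U : Finset (Fin n)}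
    {p : Finset (EdgeType n) × EdgeType n} :
    p ∈ critP R U ↔ p.1 ⊆ R ∧ p.2 ∈ R ∧ isCrit U p.1 p.2 := by
  simp [critP, and_assoc]

/-- probability of a pair -/
noncomputable def be {n : ℕ} (R : Finset (EdgeType n)) (F : Finset (EdgeType n)) : ℝ :=
  bt (#F) (#R - 1 - #F)

theorem be_nonneg {n : ℕ} (R : Finset (EdgeType n)) (F : Finset (EdgeType n)) : 0 ≤ be R F :=
  bt_nonneg _ _

open scoped Classical in
/-- weight of a vertex, restricted to `g` -/
noncomputable def wv {n : ℕ} (R : Finset (EdgeType n)) (U : Finset (Fin n))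
    (g : Finset (EdgeType n) → Prop) (v : Fin n) : ℝ :=
  ∑ p ∈ critP R U, if v ∈ unc U p.1 ∧ g p.1 then be R p.1 / #(unc U p.1) else 0

theorem wv_nonneg {n : ℕ} (R : Finset (EdgeType n)) (U : Finset (Fin n))
    (g : Finset (EdgeType n) → Prop) (v : Fin n) : 0 ≤ wv R U g v := by
  apply Finset.sum_nonneg
  intro p _
  have := be_nonneg R p.1
  split_ifs <;> positivity

theorem sum_wv {n : ℕ} (R : Finset (EdgeType n)) (U : Finset (Fin n)) :
    ∑ v ∈ U, wv R U (fun _ => True) v = ∑ p ∈ critP R U, be R p.1 := by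
  classical
  unfold wv
  rw [Finset.sum_comm]
  apply Finset.sum_congr rfl
  intro p hp
  have hne := (mem_critP.1 hp).2.2.2.1
  simp only [and_true]
  rw [← Finset.sum_filter]
  have : U.filter (fun v => v ∈ unc U p.1) = unc U p.1 := by
    ext v; simp [mem_unc]
  rw [this, Finset.sum_const, nsmul_eq_mul]
  have : (#(unc U p.1) : ℝ) ≠ 0 := by
    have := Finset.card_pos.2 hne
    positivity
  field_simp

open scoped Classical in
theorem sum_wv_le {n : ℕ} (R : Finset (EdgeType n)) (U Z : Finset (Fin n)) :
    ∑ v ∈ Z, wv R U (fun _ => True) v ≤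
      ∑ p ∈ (critP R U).filter (fun p => ∃ v ∈ Z, v ∈ unc U p.1), be R p.1 := by
  unfold wv
  rw [Finset.sum_comm, Finset.sum_filter]
  apply Finset.sum_le_sum
  intro p hp
  have hne := (mem_critP.1 hp).2.2.2.1
  have hb := be_nonneg R p.1
  simp only [and_true]
  split_ifs with h
  · rw [← Finset.sum_filter, Finset.sum_const, nsmul_eq_mul]
    have hc : #(Z.filter (fun v => v ∈ unc U p.1)) ≤ #(unc U p.1) :=
      Finset.card_le_card (fun v hv => (Finset.mem_filter.1 hv).2)
    have hc' : (#(Z.filter (fun v => v ∈ unc U p.1)) : ℝ) ≤ #(unc U p.1) := by exact_mod_cast hc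
    have : (0:ℝ) < (#(unc U p.1) : ℝ) := by
      have := Finset.card_pos.2 hne
      positivity
    rw [mul_div_assoc', div_le_iff₀ this, mul_comm]
    exact mul_le_mul_of_nonneg_left hc' hb
  · apply le_of_eq
    apply Finset.sum_eq_zero
    intro v hv
    rw [if_neg]
    exact fun h' => h ⟨v, hv, h'⟩

open scoped Classical in
/-- restricted covering sum -/
noncomputable def cs {n : ℕ} (R Q : Finset (EdgeType n)) (A : Finset (Fin n))
    (g : Finset (EdgeType n) → Prop) : ℝ :=
  ∑ F ∈ Q.powerset, if cov F A ∧ g F then be R F else 0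

open scoped Classical in
/-- vertices of `U` outside `e` -/
noncomputable def rst {n : ℕ} (U : Finset (Fin n)) (e : EdgeType n) : Finset (Fin n) :=
  U.filter (fun v => v ∉ e.1)

open scoped Classical in
theorem wv_formula {n : ℕ} (R Q S : Finset (EdgeType n)) (U : Finset (Fin n))
    (g : Finset (EdgeType n) → Prop) (y : Fin n) (hy : y ∈ U)
    (hQ : ∀ e, e ∈ Q ↔ e ∈ R ∧ y ∉ e.1) (hS : ∀ e, e ∈ S ↔ e ∈ R ∧ y ∈ e.1) :
    wv R U g y = ∑ e ∈ S, (cs R Q (rst U e) g + cs R Q (U.erase y) g) / 2 := by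
  have hQ' : Q = R.filter (fun e => y ∉ e.1) := by ext e; simp [hQ]
  have hS' : S = R.filter (fun e => y ∈ e.1) := by ext e; simp [hS]
  subst hQ' hS'
  unfold cs rst
  unfold wv critP
  rw [Finset.sum_filter, Finset.sum_product_right, Finset.sum_filter]
  apply Finset.sum_congr rfl
  intro e he
  split_ifs with hye
  · rw [← Finset.sum_add_distrib, Finset.sum_div]
    symm
    apply Finset.sum_subset_zero_on_sdiff
    · exact Finset.powerset_mono.2 (Finset.filter_subset _ _)
    · intro F hF
      rw [Finset.mem_sdiff, mem_powerset, mem_powerset] at hF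
      obtain ⟨hFR, hFQ⟩ := hF
      have : y ∉ unc U F := by
        intro h
        apply hFQ
        intro e' he'
        exact Finset.mem_filter.2 ⟨hFR he', (mem_unc.1 h).2 e' he'⟩
      simp [this]
    · intro F hF
      have hFQ := mem_powerset.1 hF
      have hyF : y ∈ unc U F :=
        mem_unc.2 ⟨hy, fun e' he' => (Finset.mem_filter.1 (hFQ he')).2⟩
      have heF : e ∉ F := fun h => (mem_unc.1 hyF).2 e h hye
      obtain ⟨x, hx⟩ := (Sym2.mem_iff_exists).1 hye
      have c1 : cov F (U.filter (fun v => v ∉ e.1)) ↔ isCrit U F e := by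
        unfold isCrit
        rw [unc_insert]
        constructor
        · intro h
          refine ⟨heF, ⟨y, hyF⟩, fun v hv => ?_⟩
          by_contra hve
          obtain ⟨e', he', hv'⟩ := h v (Finset.mem_filter.2 ⟨(mem_unc.1 hv).1, hve⟩)
          exact (mem_unc.1 hv).2 e' he' hv'
        · rintro ⟨_, _, h⟩ v hv
          by_contra hcon
          push Not at hcon
          exact (Finset.mem_filter.1 hv).2 (h v (mem_unc.2 ⟨(Finset.mem_filter.1 hv).1, hcon⟩))
      have c2 : cov F (U.erase y) ↔ unc U F = {y} := by
        constructor
        · intro h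
          rw [Finset.eq_singleton_iff_unique_mem]
          refine ⟨hyF, fun v hv => ?_⟩
          by_contra hvy
          obtain ⟨e', he', hv'⟩ := h v (Finset.mem_erase.2 ⟨hvy, (mem_unc.1 hv).1⟩)
          exact (mem_unc.1 hv).2 e' he' hv'
        · intro h v hv
          by_contra hcon
          push Not at hcon
          have : v ∈ unc U F := mem_unc.2 ⟨(Finset.mem_erase.1 hv).2, hcon⟩
          rw [h, Finset.mem_singleton] at this
          exact (Finset.mem_erase.1 hv).1 this
      rw [c1, c2]
      by_cases hg : g F
      · simp only [hg, hyF, and_true, true_and, if_true]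
        by_cases hcr : isCrit U F e
        · simp only [hcr, if_true]
          by_cases h1 : unc U F = {y}
          · simp [h1]
          · simp only [h1, if_false, add_zero]
            have hxy : y ≠ x := by
              rintro rfl
              exact e.2 (by rw [hx]; simp)
            have : unc U F = {y, x} := by
              have hsub : ∀ v ∈ unc U F, v = y ∨ v = x := by
                intro v hv
                have := (unc_insert.1 hcr.2.2) v hv
                rwa [hx, Sym2.mem_iff] at this
              apply Finset.Subset.antisymm
              · intro v hv
                simpa using hsub v hv
              · intro v hv
                rcases Finset.mem_insert.1 hv with rfl | hv
                · exact hyF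
                · rw [Finset.mem_singleton] at hv
                  subst hv
                  by_contra hcon
                  apply h1
                  rw [Finset.eq_singleton_iff_unique_mem]
                  refine ⟨hyF, fun u hu => ?_⟩
                  rcases hsub u hu with h | h
                  · exact h
                  · rw [h] at hu
                    exact absurd hu hcon
            rw [this, Finset.card_pair hxy]
            norm_num
        · have h1 : unc U F ≠ {y} := by
            intro h1
            apply hcr
            refine ⟨heF, ⟨y, hyF⟩, unc_insert.2 ?_⟩
            intro v hv
            rw [h1, Finset.mem_singleton] at hv
            subst hv
            exact hye
          simp [hcr, h1]
      · simp [hg]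
  · apply Finset.sum_eq_zero
    intro F _
    split_ifs with h1 h2
    · exfalso
      exact hye (unc_insert.1 h1.2.2 y h2.1)
    · rfl
    · rfl

theorem wv_split {n : ℕ} (R : Finset (EdgeType n)) (U : Finset (Fin n))
    (g : Finset (EdgeType n) → Prop) (v : Fin n) :
    wv R U (fun _ => True) v = wv R U g v + wv R U (fun F => ¬ g F) v := by
  classical
  unfold wv
  rw [← Finset.sum_add_distrib]
  apply Finset.sum_congr rfl
  intro p _
  by_cases hg : g p.1 <;> by_cases hv : v ∈ unc U p.1 <;> simp [hg, hv]

open scoped Classical in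
/-- support of `wv` -/
noncomputable def wvS {n : ℕ} (R : Finset (EdgeType n)) (U : Finset (Fin n))
    (g : Finset (EdgeType n) → Prop) (v : Fin n) : Finset (Finset (EdgeType n) × EdgeType n) :=
  (critP R U).filter (fun p => v ∈ unc U p.1 ∧ g p.1)

theorem mem_wvS {n : ℕ} {R : Finset (EdgeType n)} {U : Finset (Fin n)}
    {g : Finset (EdgeType n) → Prop} {v : Fin n} {p : Finset (EdgeType n) × EdgeType n} :
    p ∈ wvS R U g v ↔ p ∈ critP R U ∧ v ∈ unc U p.1 ∧ g p.1 := by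
  classical
  unfold wvS
  rw [Finset.mem_filter]

theorem wv_eq {n : ℕ} (R : Finset (EdgeType n)) (U : Finset (Fin n))
    (g : Finset (EdgeType n) → Prop) (v : Fin n) :
    wv R U g v = ∑ p ∈ wvS R U g v, be R p.1 / #(unc U p.1) := by
  classical
  unfold wvS
  rw [Finset.sum_filter]
  rfl

/-- The transposition injection. -/
theorem wv_swap {n : ℕ} (R : Finset (EdgeType n)) (U : Finset (Fin n)) (y z : Fin n)
    (hy : y ∈ U) (hz : z ∈ U) (hzR : ∀ e : EdgeType n, z ∈ e.1 → e ∈ R) :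
    wv R U (fun F => ∀ e ∈ F, swE y z e ∈ R) y ≤ wv R U (fun _ => True) z := by
  classical
  rw [wv_eq, wv_eq]
  have hU : ∀ v, Equiv.swap y z v ∈ U ↔ v ∈ U := by
    intro v
    by_cases h1 : v = y
    · subst h1; simp [hy, hz]
    · by_cases h2 : v = z
      · subst h2; simp [hy, hz]
      · rw [Equiv.swap_apply_of_ne_of_ne h1 h2]
  have hunc : ∀ F : Finset (EdgeType n), unc U (F.image (swE y z)) = (unc U F).image (Equiv.swap y z) := by
    intro F
    ext v
    rw [mem_unc, Finset.mem_image]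
    constructor
    · rintro ⟨h1, h2⟩
      refine ⟨Equiv.swap y z v, mem_unc.2 ⟨(hU v).2 h1, fun e he hv => ?_⟩, by simp⟩
      exact h2 _ (Finset.mem_image_of_mem _ he) ((mem_swE y z v e).2 hv)
    · rintro ⟨a, ha, rfl⟩
      rw [mem_unc] at ha
      refine ⟨(hU a).2 ha.1, fun e he hv => ?_⟩
      obtain ⟨e', he', rfl⟩ := Finset.mem_image.1 he
      rw [mem_swE, Equiv.swap_apply_self] at hv
      exact ha.2 e' he' hv
  let Φ : Finset (EdgeType n) × EdgeType n → Finset (EdgeType n) × EdgeType n :=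
    fun p => (p.1.image (swE y z), swE y z p.2)
  have hΦ : Function.Injective Φ := by
    rintro ⟨F, e⟩ ⟨F', e'⟩ h
    simp only [Φ, Prod.mk.injEq] at h
    obtain ⟨h1, h2⟩ := h
    rw [Finset.image_injective (swE_inj y z) h1, swE_inj y z h2]
  have hval : ∀ p : Finset (EdgeType n) × EdgeType n,
      be R p.1 / #(unc U p.1) = be R (Φ p).1 / #(unc U (Φ p).1) := by
    intro p
    simp only [Φ, be]
    rw [hunc, Finset.card_image_of_injective _ (swE_inj y z),
      Finset.card_image_of_injective _ (Equiv.swap y z).injective]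
  rw [Finset.sum_congr rfl (fun p _ => hval p)]
  rw [← Finset.sum_image (f := fun p => be R p.1 / (#(unc U p.1) : ℝ)) (fun a _ b _ h => hΦ h)]
  apply Finset.sum_le_sum_of_subset_of_nonneg
  · intro p hp
    obtain ⟨⟨F, e⟩, hq, rfl⟩ := Finset.mem_image.1 hp
    rw [mem_wvS, mem_critP] at hq
    obtain ⟨⟨hFR, heR, hcr⟩, hyF, hg⟩ := hq
    simp only at hFR heR hcr hyF hg
    rw [mem_wvS, mem_critP]
    have hye : y ∈ e.1 := unc_insert.1 hcr.2.2 y hyF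
    refine ⟨⟨?_, ?_, ?_, ?_, ?_⟩, ?_, trivial⟩
    · intro e' he'
      obtain ⟨e'', h'', rfl⟩ := Finset.mem_image.1 he'
      exact hg _ h''
    · apply hzR
      simp only [Φ]
      rw [mem_swE]
      simpa using hye
    · simp only [Φ]
      intro h
      obtain ⟨e'', h'', h3⟩ := Finset.mem_image.1 h
      rw [swE_inj y z h3] at h''
      exact hcr.1 h''
    · simp only [Φ]
      rw [hunc]
      exact hcr.2.1.image _
    · simp only [Φ]
      rw [← Finset.image_insert, hunc, hcr.2.2, Finset.image_empty]
    · simp only [Φ]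
      rw [hunc, Finset.mem_image]
      exact ⟨y, hyF, by simp⟩
  · intro p _ _
    have := be_nonneg R p.1
    positivity

/-- Comparison of the weights of `y` and `z`. -/
theorem wv_compare {n : ℕ} (R : Finset (EdgeType n)) (U : Finset (Fin n)) (y z : Fin n)
    (hy : y ∈ U) (hz : z ∈ U) (hzR : ∀ e : EdgeType n, z ∈ e.1 → e ∈ R)
    {h s s' η' l : ℝ} (hh : 0 < h) (hs : 0 < s) (hs' : 0 < s') (hη : 0 ≤ η')
    (hcond : ∀ t : ℝ, s ≤ t → t ≤ s' → l * (1 + h * t) ^ 2 ≤ η' * (h ^ 2 * t))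
    (hl : ((#(Finset.univ.filter (fun e : EdgeType n => e ∉ R ∧ y ∈ e.1)) : ℕ) : ℝ) ≤ l)
    (hd : h ≤ #(R.filter (fun e => y ∈ e.1)))
    (hdeg : ∀ v : Fin n, v ≠ y → h ≤ #(R.filter (fun e => y ∉ e.1 ∧ v ∈ e.1))) :
    (1 - η') * wv R U (fun _ => True) y - l * (s + 2 / (s' * h ^ 2)) ≤ wv R U (fun _ => True) z := by
  classical
  set Q := R.filter (fun e => y ∉ e.1) with hQ
  set D := Q.filter (fun e => swE y z e ∉ R) with hDdef
  set d := #(R.filter (fun e => y ∈ e.1)) with hddef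
  have hdpos : (0:ℝ) < d := lt_of_lt_of_le hh hd
  have hd1 : 1 ≤ d := by exact_mod_cast hdpos
  have hcard : #R = #Q + d := by
    rw [← Finset.card_filter_add_card_filter_not (s := R) (fun e => y ∈ e.1), hQ, hddef, add_comm]
  have hDQ : D ⊆ Q := Finset.filter_subset _ _
  have hDl : (#D : ℝ) ≤ l := by
    refine le_trans ?_ hl
    have : #D ≤ #(Finset.univ.filter (fun e : EdgeType n => e ∉ R ∧ y ∈ e.1)) := by
      apply Finset.card_le_card_of_injOn (swE y z) _ (swE_inj y z).injOn
      intro e he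
      obtain ⟨heQ, heR⟩ := Finset.mem_filter.1 (Finset.mem_coe.1 he)
      obtain ⟨heR', hye⟩ := Finset.mem_filter.1 heQ
      rw [Finset.mem_coe, Finset.mem_filter]
      refine ⟨Finset.mem_univ _, heR, ?_⟩
      rw [mem_swE, Equiv.swap_apply_left]
      by_contra hze
      rw [swE_eq hye hze] at heR
      exact heR heR'
    exact_mod_cast this
  have hl0 : 0 ≤ l := le_trans (by positivity) hl
  have hdegD : ∀ f ∈ D, ∀ v ∈ f.1, h ≤ #(Q.filter (fun e => v ∈ e.1)) := by
    intro f hf v hv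
    have hyf := (Finset.mem_filter.1 (hDQ hf)).2
    have hvy : v ≠ y := by rintro rfl; exact hyf hv
    have := hdeg v hvy
    rwa [hQ, Finset.filter_filter]
  have hgood : wv R U (fun F => ¬ ∃ f ∈ D, f ∈ F) y ≤ wv R U (fun _ => True) z := by
    refine le_trans ?_ (wv_swap R U y z hy hz hzR)
    unfold wv
    apply Finset.sum_le_sum
    rintro ⟨F, e⟩ hp
    have hFR := (mem_critP.1 hp).1
    simp only at hFR ⊢
    have hb := be_nonneg R F
    by_cases hc : y ∈ unc U F ∧ ¬ ∃ f ∈ D, f ∈ F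
    · have hc' : y ∈ unc U F ∧ ∀ e ∈ F, swE y z e ∈ R := by
        refine ⟨hc.1, fun e he => ?_⟩
        by_contra hcon
        apply hc.2
        refine ⟨e, Finset.mem_filter.2 ⟨Finset.mem_filter.2 ⟨hFR he, ?_⟩, hcon⟩, he⟩
        exact (mem_unc.1 hc.1).2 e he
      rw [if_pos hc, if_pos hc']
    · rw [if_neg hc]
      split_ifs <;> positivity
  have hbad : wv R U (fun F => ∃ f ∈ D, f ∈ F) y ≤
      η' * wv R U (fun _ => True) y + l * (s + 2 / (s' * h ^ 2)) := by
    have hQm : ∀ e, e ∈ Q ↔ e ∈ R ∧ y ∉ e.1 := fun e => by rw [hQ, Finset.mem_filter]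
    have hSm : ∀ e, e ∈ R.filter (fun e => y ∈ e.1) ↔ e ∈ R ∧ y ∈ e.1 := fun e => Finset.mem_filter
    rw [wv_formula R Q _ U _ y hy hQm hSm, wv_formula R Q _ U (fun _ => True) y hy hQm hSm,
      Finset.mul_sum]
    have hterm : ∀ A : Finset (Fin n),
        cs R Q A (fun F => ∃ f ∈ D, f ∈ F) ≤
        η' * cs R Q A (fun _ => True) + l * (s / d + 2 / (s' * d ^ 3)) := by
      intro A
      have k := key_int (A := A) hd1 hh hDQ hdegD hDl hs hs' hη hcond
      simp only [cs, be, hcard, and_true]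
      convert k using 1
      apply Finset.sum_congr rfl
      intro F _
      congr
    have hsum : ∑ e ∈ R.filter (fun e => y ∈ e.1), l * (s / d + 2 / (s' * d ^ 3)) ≤
        l * (s + 2 / (s' * h ^ 2)) := by
      rw [Finset.sum_const, nsmul_eq_mul, ← hddef]
      have e1 : (d : ℝ) * (l * (s / d + 2 / (s' * d ^ 3))) = l * (s + 2 / (s' * d ^ 2)) := by
        field_simp
      rw [e1]
      gcongr
    refine le_trans ?_ (add_le_add_right hsum _)
    rw [← Finset.sum_add_distrib]
    apply Finset.sum_le_sum
    intro e _
    have h1 := hterm (rst U e)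
    have h2 := hterm (U.erase y)
    linarith
  have hsplit := wv_split R U (fun F => ∃ f ∈ D, f ∈ F) y
  linarith

theorem card_edge (n : ℕ) : Fintype.card (EdgeType n) = numEdges n := by
  rw [Sym2.card_subtype_not_diag, Fintype.card_fin, Nat.choose_two_right, numEdges]

theorem exists_ord {n : ℕ} (L : List (EdgeType n)) (hL : L.Nodup) :
    L.length ≤ numEdges n ∧
    ∃ σ : Ord n, ∀ i (h : i < L.length) (h' : i < numEdges n), σ ⟨i, h'⟩ = L[i] := by
  classical
  set M := (Finset.univ \ L.toFinset).toList with hM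
  have hnd : (L ++ M).Nodup := by
    rw [List.nodup_append]
    refine ⟨hL, Finset.nodup_toList _, ?_⟩
    rintro a ha b hb rfl
    simp [hM] at hb
    exact hb ha
  have hall : ∀ x, x ∈ L ++ M := by
    intro x
    by_cases h : x ∈ L <;> simp [hM, h]
  let φ := List.Nodup.getEquivOfForallMemList (L ++ M) hnd hall
  have hlen : (L ++ M).length = numEdges n := by
    rw [← card_edge, ← Fintype.card_congr φ, Fintype.card_fin]
  refine ⟨by rw [← hlen]; simp, (finCongr hlen.symm).trans φ, ?_⟩
  intro i h h'
  simp only [Equiv.trans_apply, φ, List.Nodup.getEquivOfForallMemList_apply, finCongr_apply]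
  simp [h]

/-- edges outside the range of `g` -/
def Rg {n m : ℕ} (g : Fin m → EdgeType n) : Finset (EdgeType n) :=
  Finset.univ \ Finset.univ.image g

open scoped Classical in
/-- orders extending `g` -/
noncomputable def Om {n m : ℕ} (hmN : m ≤ numEdges n) (g : Fin m → EdgeType n) : Finset (Ord n) :=
  Finset.univ.filter (fun σ => ∀ i : Fin m, σ (Fin.castLE hmN i) = g i)

theorem mem_Om {n m : ℕ} {hmN : m ≤ numEdges n} {g : Fin m → EdgeType n} {σ : Ord n} :
    σ ∈ Om hmN g ↔ ∀ i : Fin m, σ (Fin.castLE hmN i) = g i := by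
  simp [Om]

theorem card_Rg {n m : ℕ} (g : Fin m → EdgeType n) (hg : Function.Injective g) :
    #(Rg g) + m = numEdges n := by
  have h1 : #(Finset.univ.image g) = m := by
    rw [Finset.card_image_of_injective _ hg]; simp
  have h2 := Finset.card_sdiff_add_card_eq_card (Finset.subset_univ (Finset.univ.image g))
  rw [h1, Finset.card_univ, card_edge] at h2
  exact h2

/-- edges at positions `m, …, m + k - 1` -/
def Pfx {n : ℕ} (m : ℕ) (σ : Ord n) (k : ℕ) : Finset (EdgeType n) :=
  (Finset.univ.filter (fun i : Fin (numEdges n) => m ≤ (i : ℕ) ∧ (i : ℕ) < m + k)).image σ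

theorem mem_Pfx {n m k : ℕ} {σ : Ord n} {e : EdgeType n} :
    e ∈ Pfx m σ k ↔ ∃ i : Fin (numEdges n), (m ≤ (i : ℕ) ∧ (i : ℕ) < m + k) ∧ σ i = e := by
  simp [Pfx]

theorem card_Pfx {n m k : ℕ} (σ : Ord n) (h : m + k ≤ numEdges n) : #(Pfx m σ k) = k := by
  unfold Pfx
  rw [Finset.card_image_of_injective _ σ.injective]
  have : #((Finset.univ.filter (fun i : Fin (numEdges n) => m ≤ (i : ℕ) ∧ (i : ℕ) < m + k)).image
      (fun i : Fin (numEdges n) => (i : ℕ))) = k := by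
    have : (Finset.univ.filter (fun i : Fin (numEdges n) => m ≤ (i : ℕ) ∧ (i : ℕ) < m + k)).image
      (fun i : Fin (numEdges n) => (i : ℕ)) = Finset.Ico m (m + k) := by
      ext j
      simp only [Finset.mem_image, Finset.mem_filter, Finset.mem_univ, true_and, Finset.mem_Ico]
      constructor
      · rintro ⟨i, hi, rfl⟩
        exact hi
      · intro hj
        exact ⟨⟨j, by omega⟩, hj, rfl⟩
    rw [this]; simp
  rwa [Finset.card_image_of_injective _ Fin.val_injective] at this

theorem mem_Rg_of {n m : ℕ} {hmN : m ≤ numEdges n} {g : Fin m → EdgeType n} {σ : Ord n}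
    (hσ : σ ∈ Om hmN g) (i : Fin (numEdges n)) : σ i ∈ Rg g ↔ m ≤ (i : ℕ) := by
  rw [mem_Om] at hσ
  unfold Rg
  simp only [Finset.mem_sdiff, Finset.mem_univ, true_and, Finset.mem_image, not_exists]
  constructor
  · intro h
    by_contra hlt
    push Not at hlt
    apply h ⟨i, hlt⟩
    rw [← hσ]
    rfl
  · intro h j hj
    rw [← hσ j] at hj
    have := σ.injective hj
    have h2 := congrArg Fin.val this
    simp at h2
    have := j.2
    omega

theorem Pfx_sub {n m : ℕ} {hmN : m ≤ numEdges n} {g : Fin m → EdgeType n} {σ : Ord n}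
    (hσ : σ ∈ Om hmN g) (k : ℕ) : Pfx m σ k ⊆ Rg g := by
  intro e he
  obtain ⟨i, hi, rfl⟩ := mem_Pfx.1 he
  exact (mem_Rg_of hσ i).2 hi.1

/-- fibre property -/
def isFib {n : ℕ} (m : ℕ) (F : Finset (EdgeType n)) (e : EdgeType n) (σ : Ord n) : Prop :=
  Pfx m σ (#F) = F ∧ ∃ h : m + #F < numEdges n, σ ⟨m + #F, h⟩ = e

open scoped Classical in
/-- fibre -/
noncomputable def fib {n m : ℕ} (hmN : m ≤ numEdges n) (g : Fin m → EdgeType n)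
    (F : Finset (EdgeType n)) (e : EdgeType n) : Finset (Ord n) :=
  (Om hmN g).filter (isFib m F e)

theorem mem_fib {n m : ℕ} {hmN : m ≤ numEdges n} {g : Fin m → EdgeType n}
    {F : Finset (EdgeType n)} {e : EdgeType n} {σ : Ord n} :
    σ ∈ fib hmN g F e ↔ σ ∈ Om hmN g ∧ isFib m F e σ := by
  classical
  unfold fib
  rw [Finset.mem_filter]

theorem fib_nonempty {n m : ℕ} (hmN : m ≤ numEdges n) (g : Fin m → EdgeType n)
    (hg : Function.Injective g)
    {F : Finset (EdgeType n)} {e : EdgeType n} (hF : F ⊆ Rg g) (he : e ∈ Rg g) (heF : e ∉ F) :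
    (fib hmN g F e).Nonempty := by
  classical
  have hR : ∀ x ∈ Rg g, ∀ i, g i ≠ x := by
    intro x hx i
    simp [Rg] at hx
    exact hx i
  have hnd : (List.ofFn g ++ F.toList ++ [e]).Nodup := by
    rw [List.nodup_append, List.nodup_append]
    refine ⟨⟨List.nodup_ofFn.2 hg, Finset.nodup_toList _, ?_⟩, by simp, ?_⟩
    · rintro a ha b hb rfl
      obtain ⟨i, rfl⟩ := (List.mem_ofFn' _ _).1 ha
      exact hR _ (hF (Finset.mem_toList.1 hb)) i rfl
    · rintro a ha b hb rfl
      rw [List.mem_singleton] at hb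
      subst hb
      rcases List.mem_append.1 ha with ha | ha
      · obtain ⟨i, hi⟩ := (List.mem_ofFn' _ _).1 ha
        exact hR _ he i hi
      · exact heF (Finset.mem_toList.1 ha)
  obtain ⟨hlen, σ, hσ⟩ := exists_ord _ hnd
  have hlen' : (List.ofFn g ++ F.toList ++ [e]).length = m + #F + 1 := by simp [add_assoc]
  rw [hlen'] at hlen
  have hOm : σ ∈ Om hmN g := by
    rw [mem_Om]
    intro i
    have := hσ i (by rw [hlen']; omega) (by omega)
    rw [show Fin.castLE hmN i = ⟨i, by omega⟩ from rfl, this]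
    simp
  refine ⟨σ, mem_fib.2 ⟨hOm, ?_, by omega, ?_⟩⟩
  · apply Finset.eq_of_subset_of_card_le
    · intro x hx
      obtain ⟨⟨i, hi'⟩, hi, rfl⟩ := mem_Pfx.1 hx
      simp only at hi
      rw [hσ i (by rw [hlen']; omega) hi']
      rw [List.getElem_append_left (by simp; omega), List.getElem_append_right (by simp; omega)]
      exact Finset.mem_toList.1 (List.getElem_mem _)
    · rw [card_Pfx σ (by omega)]
  · rw [hσ (m + #F) (by rw [hlen']; omega)]
    rw [List.getElem_append_right (by simp)]
    simp

theorem fib_le {n m : ℕ} (hmN : m ≤ numEdges n) (g : Fin m → EdgeType n)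
    {F F' : Finset (EdgeType n)} {e e' : EdgeType n} (hFF : #F = #F')
    (h1 : (fib hmN g F e).Nonempty) (h2 : (fib hmN g F' e').Nonempty) :
    #(fib hmN g F e) ≤ #(fib hmN g F' e') := by
  classical
  obtain ⟨σ1, h1⟩ := h1
  obtain ⟨σ2, h2⟩ := h2
  obtain ⟨o1, p1, k1, q1⟩ := mem_fib.1 h1
  obtain ⟨o2, p2, k2, q2⟩ := mem_fib.1 h2
  rw [mem_Om] at o1 o2
  have hπ : ∀ i x, σ1 i = x → (σ1.symm.trans σ2) x = σ2 i := by
    rintro i x rfl; simp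
  have hP : ∀ (σ : Ord n) (π : EdgeType n ≃ EdgeType n) k, Pfx m (σ.trans π) k = (Pfx m σ k).image π := by
    intro σ π k
    unfold Pfx
    rw [Finset.image_image]; rfl
  apply Finset.card_le_card_of_injOn (fun σ => σ.trans (σ1.symm.trans σ2))
  · intro σ hσ
    obtain ⟨o, p, k, q⟩ := mem_fib.1 (Finset.mem_coe.1 hσ)
    rw [mem_Om] at o
    rw [Finset.mem_coe, mem_fib, mem_Om]
    refine ⟨?_, ?_, k2, ?_⟩
    · intro i
      rw [Equiv.trans_apply, o i, hπ (Fin.castLE hmN i) _ (o1 i), o2]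
    · rw [hP, ← hFF, p, ← p1, ← hP]
      rw [show σ1.trans (σ1.symm.trans σ2) = σ2 by ext; simp, hFF, p2]
    · rw [Equiv.trans_apply]
      have : (⟨m + #F', k2⟩ : Fin (numEdges n)) = ⟨m + #F, k⟩ := by simp [hFF]
      rw [this, q, hπ _ _ q1, ← this, q2]
  · intro σ _ σ' _ h
    apply Equiv.ext
    intro i
    have := congrArg (fun τ : Ord n => τ i) h
    simpa using this

theorem card_fib {n m : ℕ} (hmN : m ≤ numEdges n) (g : Fin m → EdgeType n)
    (hg : Function.Injective g)
    {F : Finset (EdgeType n)} {e : EdgeType n} (hF : F ⊆ Rg g) (he : e ∈ Rg g) (heF : e ∉ F) :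
    (#(fib hmN g F e) : ℝ) = be (Rg g) F * #(Om hmN g) := by
  classical
  have hlt : #F < #(Rg g) := Finset.card_lt_card
    ⟨hF, fun h => heF (h he)⟩
  have hcR := card_Rg g hg
  set k := #F with hk
  have hkN : m + k < numEdges n := by omega
  set T := (Finset.powersetCard k (Rg g)).sigma (fun F => Rg g \ F) with hT
  have hTcard : #T = (#(Rg g)).choose k * (#(Rg g) - k) := by
    rw [hT, Finset.card_sigma]
    rw [Finset.sum_congr rfl (g := fun _ => #(Rg g) - k), Finset.sum_const, Finset.card_powersetCard,
      smul_eq_mul]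
    intro F' hF'
    rw [Finset.mem_powersetCard] at hF'
    rw [Finset.card_sdiff_of_subset hF'.1, hF'.2]
  have hsum : #(Om hmN g) = ∑ p ∈ T, #(fib hmN g p.1 p.2) := by
    rw [Finset.card_eq_sum_card_fiberwise
      (f := fun σ : Ord n => (⟨Pfx m σ k, σ ⟨m + k, hkN⟩⟩ : (_ : Finset (EdgeType n)) × EdgeType n))
      (t := T)]
    · apply Finset.sum_congr rfl
      rintro ⟨F', e'⟩ hp
      rw [hT, Finset.mem_sigma, Finset.mem_powersetCard] at hp
      obtain ⟨⟨-, hc⟩, -⟩ := hp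
      simp only at hc
      congr 1
      ext σ
      rw [Finset.mem_filter, mem_fib]
      simp only [Sigma.mk.injEq, heq_eq_eq]
      unfold isFib
      rw [hc]
      simp [hkN]
    · intro σ hσ
      have hσ := Finset.mem_coe.1 hσ
      rw [Finset.mem_coe, hT, Finset.mem_sigma, Finset.mem_powersetCard]
      refine ⟨⟨Pfx_sub hσ k, card_Pfx σ hkN.le⟩, ?_⟩
      simp only [Finset.mem_sdiff]
      refine ⟨(mem_Rg_of hσ _).2 (by simp), ?_⟩
      intro h
      obtain ⟨i, hi, hi2⟩ := mem_Pfx.1 h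
      have := σ.injective hi2
      subst this
      simp at hi
  have hconst : ∀ p ∈ T, #(fib hmN g p.1 p.2) = #(fib hmN g F e) := by
    rintro ⟨F', e'⟩ hp
    rw [hT, Finset.mem_sigma, Finset.mem_powersetCard, Finset.mem_sdiff] at hp
    obtain ⟨⟨hs, hc⟩, he1, he2⟩ := hp
    have n1 := fib_nonempty hmN g hg hs he1 he2
    have n2 := fib_nonempty hmN g hg hF he heF
    exact le_antisymm (fib_le hmN g (hc.trans hk) n1 n2) (fib_le hmN g (hk.symm.trans hc.symm) n2 n1)
  rw [Finset.sum_congr rfl hconst, Finset.sum_const, hTcard, smul_eq_mul] at hsum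
  have hb := bt_choose (#(Rg g)) k hlt
  rw [hsum]
  unfold be
  rw [← hk]
  push_cast at hb ⊢
  linear_combination (-(#(fib hmN g F e) : ℝ)) * hb

theorem Om_pos {n m : ℕ} (hmN : m ≤ numEdges n) (g : Fin m → EdgeType n)
    (hg : Function.Injective g) : 0 < #(Om hmN g) := by
  rw [Finset.card_pos]
  obtain ⟨_, σ, hσ⟩ := exists_ord (List.ofFn g) (List.nodup_ofFn.2 hg)
  refine ⟨σ, mem_Om.2 fun i => ?_⟩
  have := hσ i (by simp) (by omega)
  rw [show Fin.castLE hmN i = ⟨i, by omega⟩ from rfl, this]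
  simp

theorem deg_pos_iff {n : ℕ} {S : Finset (Sym2 (Fin n))} {v : Fin n} :
    1 ≤ deg S v ↔ ∃ e ∈ S, v ∈ e := by
  unfold deg
  rw [Nat.one_le_iff_ne_zero, ← Nat.pos_iff_ne_zero, Finset.card_pos]
  constructor
  · rintro ⟨e, he⟩
    exact ⟨e, Finset.mem_filter.1 he⟩
  · rintro ⟨e, he⟩
    exact ⟨e, Finset.mem_filter.2 he⟩

theorem prefix_succ {n : ℕ} (σ : Ord n) (i : ℕ) (h : i < numEdges n) :
    prefixList σ (i + 1) = prefixList σ i ++ [(σ ⟨i, h⟩).1] := by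
  unfold prefixList
  rw [List.range_succ, List.filterMap_append]
  simp [h]

theorem prefix_eq {n m : ℕ} {hmN : m ≤ numEdges n} {g : Fin m → EdgeType n} {σ : Ord n}
    (hσ : σ ∈ Om hmN g) (i : ℕ) (hi : i ≤ m) :
    prefixList σ i = (List.ofFn (fun i : Fin m => (g i).1)).take i := by
  induction i with
  | zero => simp [prefixList]
  | succ i ih =>
    rw [prefix_succ σ i (by omega), ih (by omega), List.take_add_one]
    congr 1
    rw [List.getElem?_eq_getElem (by simp; omega)]
    simp only [List.getElem_ofFn, Option.toList_some]
    have := mem_Om.1 hσ ⟨i, by omega⟩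
    rw [← this]
    rfl

theorem buy_succ {n : ℕ} (st : Strategy n) (σ : Ord n) (i : ℕ) (h : i < numEdges n) :
    buy st σ (i + 1) = if st (prefixList σ (i + 1)) then insert (σ ⟨i, h⟩).1 (buy st σ i)
      else buy st σ i := by
  rw [buy]
  simp [h]

theorem buy_eq_aux {n m : ℕ} {hmN : m ≤ numEdges n} {g : Fin m → EdgeType n} {σ : Ord n}
    (st : Strategy n) (hσ : σ ∈ Om hmN g) (L : List (Sym2 (Fin n)))
    (hL : L = List.ofFn (fun i : Fin m => (g i).1)) (i : ℕ) (hi : i ≤ m) :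
    buy st σ i = ((List.range i).filterMap
      (fun i => if st (L.take (i + 1)) then L[i]? else none)).toFinset := by
  induction i with
  | zero => simp [buy]
  | succ i ih =>
    rw [buy_succ st σ i (by omega), ih (by omega), prefix_eq hσ (i + 1) hi, ← hL, List.range_succ,
      List.filterMap_append]
    have hget : L[i]? = some (σ ⟨i, by omega⟩).1 := by
      subst hL
      rw [List.getElem?_eq_getElem (by simp; omega)]
      simp only [List.getElem_ofFn]
      have := mem_Om.1 hσ ⟨i, by omega⟩
      rw [← this]
      rfl
    by_cases hst : st (L.take (i + 1)) = true
    · simp only [hst, if_true, List.toFinset_append]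
      simp [hst, hget, Finset.union_comm]
    · simp [hst]

theorem buy_eq {n m : ℕ} {hmN : m ≤ numEdges n} {g : Fin m → EdgeType n} {σ : Ord n}
    (st : Strategy n) (hσ : σ ∈ Om hmN g) :
    buy st σ m = buyList st (List.ofFn (fun i : Fin m => (g i).1)) := by
  rw [buy_eq_aux st hσ _ rfl m le_rfl]
  unfold buyList
  rw [List.length_ofFn]

theorem buy_mono {n : ℕ} (st : Strategy n) (σ : Ord n) {i j : ℕ} (h : i ≤ j) :
    buy st σ i ⊆ buy st σ j := by
  induction j, h using Nat.le_induction with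
  | base => exact Finset.Subset.refl _
  | succ j _ ih =>
    refine ih.trans ?_
    rw [buy]
    split_ifs
    · exact Finset.subset_insert _ _
    · exact Finset.Subset.refl _
    · exact Finset.Subset.refl _

theorem tau_spec {n : ℕ} (hn : 2 ≤ n) (σ : Ord n) (v : Fin n) :
    1 ≤ deg (procEdges σ (tau 1 σ)) v := by
  have hne : {m | ∀ v : Fin n, 1 ≤ deg (procEdges σ m) v}.Nonempty := by
    refine ⟨numEdges n, fun v => ?_⟩
    rw [deg_pos_iff]
    haveI : Nontrivial (Fin n) := Fin.nontrivial_iff_two_le.2 hn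
    obtain ⟨w, hw⟩ := exists_ne v
    refine ⟨s(v, w), ?_, by simp⟩
    unfold procEdges
    rw [Finset.mem_image]
    refine ⟨σ.symm ⟨s(v, w), by simpa using hw.symm⟩, by simp, by simp⟩
  exact Nat.sInf_mem hne v

theorem event_of {n m : ℕ} (hn : 2 ≤ n) {hmN : m ≤ numEdges n} {g : Fin m → EdgeType n} {σ : Ord n}
    (st : Strategy n) (hσ : σ ∈ Om hmN g)
    (hst : ∀ j : ℕ, m ≤ j → ∀ hj : j < numEdges n,
            (st (prefixList σ (j + 1)) = true ↔
              ∃ w ∈ ((σ ⟨j, hj⟩ : EdgeType n) : Sym2 (Fin n)), deg (buy st σ j) w = 0))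
    (U : Finset (Fin n))
    (hU : ∀ v, v ∉ U → 1 ≤ deg (buyList st (List.ofFn (fun i : Fin m => (g i).1))) v)
    {F : Finset (EdgeType n)} {e : EdgeType n} (hf : isFib m F e σ) (hc : isCrit U F e)
    (z : Fin n) (hz : z ∈ unc U F)
    (hzL : deg (List.ofFn (fun i : Fin m => (g i).1)).toFinset z = 0) (v : Fin n) :
    1 ≤ deg (buy st σ (tau 1 σ)) v := by
  obtain ⟨hP, hk, he⟩ := hf
  have htau : m + #F + 1 ≤ tau 1 σ := by
    by_contra hlt
    push Not at hlt
    obtain ⟨e', he', hze⟩ := deg_pos_iff.1 (tau_spec hn σ z)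
    unfold procEdges at he'
    obtain ⟨i, hi, rfl⟩ := Finset.mem_image.1 he'
    have hi := (Finset.mem_filter.1 hi).2
    by_cases him : (i : ℕ) < m
    · have h1 : 1 ≤ deg (List.ofFn (fun i : Fin m => (g i).1)).toFinset z := by
        rw [deg_pos_iff]
        refine ⟨_, ?_, hze⟩
        rw [List.mem_toFinset, List.mem_ofFn']
        refine ⟨⟨i, him⟩, ?_⟩
        simp only
        rw [← mem_Om.1 hσ]
        rfl
      omega
    · refine (mem_unc.1 hz).2 (σ i) ?_ hze
      rw [← hP]
      exact mem_Pfx.2 ⟨i, ⟨by omega, by omega⟩, rfl⟩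
  by_cases hv : v ∈ U
  · have hcov : ∃ j, ∃ hj : j < numEdges n, m ≤ j ∧ j ≤ m + #F ∧ v ∈ (σ ⟨j, hj⟩).1 := by
      by_cases hvF : v ∈ unc U F
      · exact ⟨m + #F, hk, by omega, le_rfl, by rw [he]; exact unc_insert.1 hc.2.2 v hvF⟩
      · rw [mem_unc] at hvF
        push Not at hvF
        obtain ⟨e', he', hve⟩ := hvF hv
        rw [← hP] at he'
        obtain ⟨i, hi, rfl⟩ := mem_Pfx.1 he'
        exact ⟨i, i.2, hi.1, by omega, hve⟩
    obtain ⟨j, hj, hmj, hjF, hvj⟩ := hcov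
    have h1 : 1 ≤ deg (buy st σ (j + 1)) v := by
      by_cases h0 : deg (buy st σ j) v = 0
      · have := (hst j hmj hj).2 ⟨v, hvj, h0⟩
        rw [buy_succ st σ j hj, if_pos this, deg_pos_iff]
        exact ⟨_, Finset.mem_insert_self _ _, hvj⟩
      · obtain ⟨e', he', hve⟩ := deg_pos_iff.1 (Nat.one_le_iff_ne_zero.2 h0)
        exact deg_pos_iff.2 ⟨e', buy_mono st σ (Nat.le_succ j) he', hve⟩
    obtain ⟨e', he', hve⟩ := deg_pos_iff.1 h1
    exact deg_pos_iff.2 ⟨e', buy_mono st σ (by omega) he', hve⟩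
  · have h1 := hU v hv
    rw [← buy_eq st hσ] at h1
    obtain ⟨e', he', hve⟩ := deg_pos_iff.1 h1
    exact deg_pos_iff.2 ⟨e', buy_mono st σ (by omega) he', hve⟩

theorem Pfx_mono {n m : ℕ} (σ : Ord n) {k k' : ℕ} (h : k ≤ k') : Pfx m σ k ⊆ Pfx m σ k' := by
  intro e he
  obtain ⟨i, hi, rfl⟩ := mem_Pfx.1 he
  exact mem_Pfx.2 ⟨i, ⟨hi.1, by omega⟩, rfl⟩

theorem unc_anti {n : ℕ} {U : Finset (Fin n)} {F F' : Finset (EdgeType n)} (h : F ⊆ F') :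
    unc U F' ⊆ unc U F := by
  intro v hv
  rw [mem_unc] at hv ⊢
  exact ⟨hv.1, fun e he => hv.2 e (h he)⟩

theorem fib_insert_sub {n m : ℕ} {σ : Ord n} {F F' : Finset (EdgeType n)} {e e' : EdgeType n}
    (h : isFib m F e σ) (h' : isFib m F' e' σ) (hlt : #F < #F') : insert e F ⊆ F' := by
  obtain ⟨hP, hk, he⟩ := h
  intro x hx
  rw [← h'.1]
  rcases Finset.mem_insert.1 hx with rfl | hx
  · exact mem_Pfx.2 ⟨⟨m + #F, hk⟩, ⟨by simp, by simpa using hlt⟩, he⟩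
  · rw [← hP] at hx
    exact Pfx_mono σ hlt.le hx

theorem crit_unique {n m : ℕ} {σ : Ord n} {U : Finset (Fin n)}
    {F F' : Finset (EdgeType n)} {e e' : EdgeType n}
    (h : isFib m F e σ) (h' : isFib m F' e' σ) (hc : isCrit U F e) (hc' : isCrit U F' e') :
    F = F' ∧ e = e' := by
  rcases lt_trichotomy (#F) (#F') with hlt | heq | hlt
  · exfalso
    have := unc_anti (U := U) (fib_insert_sub h h' hlt)
    rw [hc.2.2] at this
    obtain ⟨v, hv⟩ := hc'.2.1
    exact absurd (this hv) (Finset.notMem_empty _)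
  · obtain ⟨hP, hk, he⟩ := h
    obtain ⟨hP', hk', he'⟩ := h'
    have hF : F = F' := by rw [← hP, ← hP', heq]
    subst hF
    exact ⟨rfl, he.symm.trans he'⟩
  · exfalso
    have := unc_anti (U := U) (fib_insert_sub h' h hlt)
    rw [hc'.2.2] at this
    obtain ⟨v, hv⟩ := hc.2.1
    exact absurd (this hv) (Finset.notMem_empty _)

theorem crit_exists {n m : ℕ} {hmN : m ≤ numEdges n} {g : Fin m → EdgeType n} {σ : Ord n}
    (hg : Function.Injective g) (hσ : σ ∈ Om hmN g) {U : Finset (Fin n)} (hUne : U.Nonempty)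
    (hUR : unc U (Rg g) = ∅) :
    ∃ p ∈ critP (Rg g) U, isFib m p.1 p.2 σ := by
  classical
  have hcR := card_Rg g hg
  have hfull : Pfx m σ (#(Rg g)) = Rg g := by
    apply Finset.eq_of_subset_of_card_le (Pfx_sub hσ _)
    rw [card_Pfx σ (by omega)]
  have hex : ∃ k, unc U (Pfx m σ k) = ∅ := ⟨#(Rg g), by rw [hfull, hUR]⟩
  have hle : Nat.find hex ≤ #(Rg g) := Nat.find_min' hex (by rw [hfull, hUR])
  have hspec := Nat.find_spec hex
  have hpos : Nat.find hex ≠ 0 := by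
    intro h0
    rw [h0] at hspec
    obtain ⟨v, hv⟩ := hUne
    have : v ∈ unc U (Pfx m σ 0) := mem_unc.2 ⟨hv, fun e he => by
      obtain ⟨i, hi, _⟩ := mem_Pfx.1 he
      omega⟩
    rw [hspec] at this
    exact absurd this (Finset.notMem_empty _)
  obtain ⟨k, hk⟩ := Nat.exists_eq_succ_of_ne_zero hpos
  have hmin : unc U (Pfx m σ k) ≠ ∅ := Nat.find_min hex (by omega)
  rw [hk] at hspec hle
  have hkN : m + k < numEdges n := by omega
  have hcard : #(Pfx m σ k) = k := card_Pfx σ hkN.le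
  have hins : insert (σ ⟨m + k, hkN⟩) (Pfx m σ k) = Pfx m σ (k + 1) := by
    ext x
    rw [Finset.mem_insert, mem_Pfx, mem_Pfx]
    constructor
    · rintro (rfl | ⟨i, hi, rfl⟩)
      · exact ⟨_, ⟨by simp, by simp⟩, rfl⟩
      · exact ⟨i, ⟨hi.1, by omega⟩, rfl⟩
    · rintro ⟨i, hi, rfl⟩
      by_cases h : (i : ℕ) = m + k
      · left
        congr 1
        exact Fin.ext h
      · right
        exact ⟨i, ⟨hi.1, by omega⟩, rfl⟩
  refine ⟨(Pfx m σ k, σ ⟨m + k, hkN⟩), mem_critP.2 ⟨Pfx_sub hσ k, ?_, ?_, ?_, ?_⟩, ?_, ?_⟩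
  · exact (mem_Rg_of hσ _).2 (by simp)
  · intro h
    obtain ⟨i, hi, hi2⟩ := mem_Pfx.1 h
    have := σ.injective hi2
    subst this
    simp at hi
  · exact Finset.nonempty_iff_ne_empty.2 hmin
  · simp only
    rw [hins]
    exact hspec
  · simp only
    rw [hcard]
  · simp only [hcard]
    exact ⟨hkN, trivial⟩

theorem one_le_sum {n m : ℕ} (hmN : m ≤ numEdges n) (g : Fin m → EdgeType n)
    (hg : Function.Injective g) {U : Finset (Fin n)} (hUne : U.Nonempty)
    (hUR : unc U (Rg g) = ∅) :
    1 ≤ ∑ p ∈ critP (Rg g) U, be (Rg g) p.1 := by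
  classical
  have h1 : #(Om hmN g) ≤ ∑ p ∈ critP (Rg g) U, #(fib hmN g p.1 p.2) := by
    refine le_trans (Finset.card_le_card ?_) Finset.card_biUnion_le
    intro σ hσ
    obtain ⟨p, hp, hf⟩ := crit_exists hg hσ hUne hUR
    exact Finset.mem_biUnion.2 ⟨p, hp, mem_fib.2 ⟨hσ, hf⟩⟩
  have hpos : (0:ℝ) < #(Om hmN g) := by exact_mod_cast Om_pos hmN g hg
  have h2 : (#(Om hmN g) : ℝ) ≤ ∑ p ∈ critP (Rg g) U, (#(fib hmN g p.1 p.2) : ℝ) := by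
    exact_mod_cast h1
  rw [Finset.sum_congr rfl (fun p hp => card_fib hmN g hg (mem_critP.1 hp).1 (mem_critP.1 hp).2.1
    (mem_critP.1 hp).2.2.1), ← Finset.sum_mul] at h2
  by_contra hlt
  push Not at hlt
  nlinarith

open scoped Classical in
theorem sum_le_cond {n m : ℕ} (hmN : m ≤ numEdges n) (g : Fin m → EdgeType n)
    (hg : Function.Injective g) (U Z : Finset (Fin n)) (ev : Ord n → Prop)
    (hev : ∀ σ ∈ Om hmN g, ∀ F e, isFib m F e σ → isCrit U F e → (∃ v ∈ Z, v ∈ unc U F) → ev σ) :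
    ∑ p ∈ (critP (Rg g) U).filter (fun p => ∃ v ∈ Z, v ∈ unc U p.1), be (Rg g) p.1 ≤
      CondPr ev (fun σ => ∀ i : Fin m, σ (Fin.castLE hmN i) = g i) := by
  set T := (critP (Rg g) U).filter (fun p => ∃ v ∈ Z, v ∈ unc U p.1) with hT
  have hTm : ∀ p ∈ T, p ∈ critP (Rg g) U ∧ ∃ v ∈ Z, v ∈ unc U p.1 := fun p hp => by
    simpa [hT] using hp
  have hpos : (0:ℝ) < #(Om hmN g) := by exact_mod_cast Om_pos hmN g hg
  have h1 : ∑ p ∈ T, #(fib hmN g p.1 p.2) ≤ #((Om hmN g).filter ev) := by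
    rw [← Finset.card_biUnion]
    · apply Finset.card_le_card
      intro σ hσ
      obtain ⟨p, hp, hf⟩ := Finset.mem_biUnion.1 hσ
      obtain ⟨ho, hf⟩ := mem_fib.1 hf
      obtain ⟨hp1, hp2⟩ := hTm p hp
      exact Finset.mem_filter.2 ⟨ho, hev σ ho _ _ hf (mem_critP.1 hp1).2.2 hp2⟩
    · intro p hp q hq hpq
      rw [Function.onFun, Finset.disjoint_left]
      intro σ h1 h2
      apply hpq
      have := crit_unique (mem_fib.1 h1).2 (mem_fib.1 h2).2 (mem_critP.1 (hTm p hp).1).2.2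
        (mem_critP.1 (hTm q hq).1).2.2
      exact Prod.ext this.1 this.2
  have h2 : ∑ p ∈ T, (#(fib hmN g p.1 p.2) : ℝ) ≤ #((Om hmN g).filter ev) := by
    exact_mod_cast h1
  rw [Finset.sum_congr rfl (fun p hp => card_fib hmN g hg (mem_critP.1 (hTm p hp).1).1
    (mem_critP.1 (hTm p hp).1).2.1 (mem_critP.1 (hTm p hp).1).2.2.1), ← Finset.sum_mul] at h2
  have hcard : (0:ℝ) < Fintype.card (Ord n) := by
    have : #(Om hmN g) ≤ Fintype.card (Ord n) := Finset.card_le_univ _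
    have h3 := Om_pos hmN g hg
    exact_mod_cast lt_of_lt_of_le h3 this
  have e1 : Pr (fun σ : Ord n => ev σ ∧ ∀ i : Fin m, σ (Fin.castLE hmN i) = g i) =
      (#((Om hmN g).filter ev) : ℝ) / Fintype.card (Ord n) := by
    unfold Pr
    congr 3
    ext σ
    simp [Om, and_comm]
  have e2 : Pr (fun σ : Ord n => ∀ i : Fin m, σ (Fin.castLE hmN i) = g i) =
      (#(Om hmN g) : ℝ) / Fintype.card (Ord n) := by
    unfold Pr
    congr 3
    ext σ
    simp [Om]
  unfold CondPr
  rw [e1, e2]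
  rw [div_div_div_cancel_right₀ hcard.ne', le_div_iff₀ hpos]
  exact h2

theorem deg_out {n m : ℕ} (g : Fin m → EdgeType n) (v : Fin n) :
    #(Finset.univ.filter (fun e : EdgeType n => e ∉ Rg g ∧ v ∈ e.1)) ≤
      deg (List.ofFn (fun i : Fin m => (g i).1)).toFinset v := by
  unfold deg
  apply Finset.card_le_card_of_injOn (fun e : EdgeType n => e.1) _ Subtype.val_injective.injOn
  intro e he
  rw [Finset.mem_coe, Finset.mem_filter] at he
  obtain ⟨-, heR, hve⟩ := he
  rw [Finset.mem_coe, Finset.mem_filter, List.mem_toFinset, List.mem_ofFn']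
  refine ⟨?_, hve⟩
  simp only [Rg, Finset.mem_sdiff, Finset.mem_univ, true_and, not_not, Finset.mem_image] at heR
  obtain ⟨i, hi⟩ := heR
  exact ⟨i, by simp [hi]⟩

theorem star_card {n : ℕ} (v : Fin n) (W : Finset (Fin n)) (hv : v ∉ W) (A : Finset (EdgeType n))
    (hA : ∀ e : EdgeType n, ∀ w ∈ W, e.1 = s(v, w) → e ∈ A) : #W ≤ #A := by
  classical
  have hne : ∀ w ∈ W, ¬ (s(v, w) : Sym2 (Fin n)).IsDiag := fun w hw h => by
    rw [Sym2.mk_isDiag_iff] at h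
    exact hv (h ▸ hw)
  have h1 : #W ≤ #(A.image Subtype.val) := by
    apply Finset.card_le_card_of_injOn (fun w => s(v, w))
    · intro w hw
      have hw := Finset.mem_coe.1 hw
      rw [Finset.mem_coe, Finset.mem_image]
      exact ⟨⟨s(v, w), hne w hw⟩, hA _ w hw rfl, rfl⟩
    · intro w _ w' _ h
      have h : w = w' ∨ v = w' ∧ w = v := by simpa using h
      rcases h with h | ⟨h, h'⟩
      · exact h
      · exact h'.trans h
  exact h1.trans Finset.card_image_le

theorem deg_in {n m : ℕ} (g : Fin m → EdgeType n) (v : Fin n) {l : ℝ}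
    (hl : (deg (List.ofFn (fun i : Fin m => (g i).1)).toFinset v : ℝ) ≤ l)
    (hn : l + 2 ≤ (n : ℝ) / 2) :
    (n : ℝ) / 2 ≤ #((Rg g).filter (fun e => v ∈ e.1)) := by
  classical
  have h1 := star_card v (Finset.univ.erase v) (by simp)
    ((Rg g).filter (fun e => v ∈ e.1) ∪
      Finset.univ.filter (fun e : EdgeType n => e ∉ Rg g ∧ v ∈ e.1)) (by
    intro e w _ he
    have hve : v ∈ e.1 := by rw [he]; simp
    by_cases h : e ∈ Rg g <;> simp [h, hve])
  have h2 := h1.trans (Finset.card_union_le _ _)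
  have h3 := deg_out g v
  rw [Finset.card_erase_of_mem (Finset.mem_univ _), Finset.card_univ, Fintype.card_fin] at h2
  have h4 : n ≤ #((Rg g).filter (fun e => v ∈ e.1)) +
    deg (List.ofFn (fun i : Fin m => (g i).1)).toFinset v + 1 := by omega
  have h5 : (n : ℝ) ≤ #((Rg g).filter (fun e => v ∈ e.1)) +
    deg (List.ofFn (fun i : Fin m => (g i).1)).toFinset v + 1 := by exact_mod_cast h4
  linarith

theorem deg_in2 {n m : ℕ} (g : Fin m → EdgeType n) (v y : Fin n) (hvy : v ≠ y) {l : ℝ}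
    (hl : (deg (List.ofFn (fun i : Fin m => (g i).1)).toFinset v : ℝ) ≤ l)
    (hn : l + 2 ≤ (n : ℝ) / 2) :
    (n : ℝ) / 2 ≤ #((Rg g).filter (fun e => y ∉ e.1 ∧ v ∈ e.1)) := by
  classical
  have h1 := star_card v ((Finset.univ.erase v).erase y) (by simp)
    ((Rg g).filter (fun e => y ∉ e.1 ∧ v ∈ e.1) ∪
      Finset.univ.filter (fun e : EdgeType n => e ∉ Rg g ∧ v ∈ e.1)) (by
    intro e w hw he
    have hve : v ∈ e.1 := by rw [he]; simp
    have hye : y ∉ e.1 := by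
      rw [he, Sym2.mem_iff]
      rintro (h | h)
      · exact hvy h.symm
      · simp [h] at hw
    by_cases h : e ∈ Rg g <;> simp [h, hve, hye])
  have h2 := h1.trans (Finset.card_union_le _ _)
  have h3 := deg_out g v
  rw [Finset.card_erase_of_mem (by simp [hvy.symm]), Finset.card_erase_of_mem (Finset.mem_univ _),
    Finset.card_univ, Fintype.card_fin] at h2
  have h4 : n ≤ #((Rg g).filter (fun e => y ∉ e.1 ∧ v ∈ e.1)) +
    deg (List.ofFn (fun i : Fin m => (g i).1)).toFinset v + 2 := by omega
  have h5 : (n : ℝ) ≤ #((Rg g).filter (fun e => y ∉ e.1 ∧ v ∈ e.1)) +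
    deg (List.ofFn (fun i : Fin m => (g i).1)).toFinset v + 2 := by exact_mod_cast h4
  linarith

theorem params {η' : ℝ} (hη : 0 < η') : ∃ n₀ : ℕ, ∀ n : ℕ, n₀ ≤ n →
    2 ≤ n ∧ 1 ≤ 10 * Real.log n ∧ 3 ≤ η' * (10 * Real.log n) ∧
    12 * (10 * Real.log n) ^ 4 ≤ η' * n ∧ 10 * Real.log n + 2 ≤ (n : ℝ) / 2 := by
  have hlog : Tendsto (fun n : ℕ => Real.log n) atTop atTop :=
    Real.tendsto_log_atTop.comp tendsto_natCast_atTop_atTop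
  have h4 := (Real.isLittleO_pow_log_id_atTop (n := 4)).def
    (show (0:ℝ) < min η' 1 / 240000 by positivity)
  have h4' := tendsto_natCast_atTop_atTop (R := ℝ) |>.eventually h4
  have hall := (eventually_ge_atTop (16:ℕ)).and ((hlog.eventually_ge_atTop (max 1 (3 / (10 * η')))).and h4')
  obtain ⟨n₀, hn₀⟩ := eventually_atTop.1 hall
  refine ⟨n₀, fun n hn => ?_⟩
  obtain ⟨h2, h1, h3⟩ := hn₀ n hn
  have hl1 : 1 ≤ Real.log n := le_trans (le_max_left _ _) h1
  have hl2 : 3 / (10 * η') ≤ Real.log n := le_trans (le_max_right _ _) h1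
  have hn2 : (16:ℝ) ≤ n := by exact_mod_cast h2
  simp only [id, Real.norm_eq_abs] at h3
  rw [abs_of_nonneg (by positivity), abs_of_nonneg (by positivity)] at h3
  have hm1 : min η' 1 ≤ η' := min_le_left _ _
  have hm2 : min η' 1 ≤ 1 := min_le_right _ _
  have a1 : min η' 1 * n ≤ η' * n := by gcongr
  have a2 : min η' 1 * n ≤ 1 * n := by gcongr
  have a3 : Real.log n ≤ Real.log n ^ 4 := le_self_pow₀ hl1 (by norm_num)
  rw [div_le_iff₀ (by positivity)] at hl2
  refine ⟨by omega, by linarith, by linarith, ?_, ?_⟩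
  · rw [mul_pow]; linarith
  · linarith

theorem cond_t {η' l n : ℝ} (hη : 0 < η') (hn : 0 < n) (h1 : 1 ≤ l) (h3 : 3 ≤ η' * l)
    (h12 : 12 * l ^ 4 ≤ η' * n) (t : ℝ) (ht : 1 / (n * l ^ 3) ≤ t) (ht' : t ≤ 1 / l ^ 2) :
    l * (1 + n / 2 * t) ^ 2 ≤ η' * ((n / 2) ^ 2 * t) := by
  have hl : 0 < l := by linarith
  have ht0 : 0 < t := lt_of_lt_of_le (by positivity) ht
  rw [div_le_iff₀ (by positivity)] at ht
  rw [le_div_iff₀ (by positivity)] at ht'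
  have a0 : l ≤ l ^ 4 := le_self_pow₀ h1 (by norm_num)
  have b1 : 3 * l ≤ η' * ((n / 2) ^ 2 * t) := by
    have c1 : 12 * l ^ 4 * (n * t) ≤ η' * n * (n * t) := by gcongr
    have c2 : l * 1 ≤ l * (t * (n * l ^ 3)) := by gcongr
    nlinarith
  have b2 : 3 * (2 * l * (n / 2 * t)) ≤ η' * ((n / 2) ^ 2 * t) := by
    have c1 : 12 * l * (n * t) ≤ η' * n * (n * t) := by
      apply mul_le_mul_of_nonneg_right _ (by positivity)
      linarith
    nlinarith
  have b3 : 3 * (l * (n / 2 * t) ^ 2) ≤ η' * ((n / 2) ^ 2 * t) := by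
    have c1 : 3 * (l * t) ≤ η' := by
      have d1 : 3 * (l * t) ≤ η' * l * (l * t) := by gcongr
      have d2 : η' * (t * l ^ 2) ≤ η' * 1 := by gcongr
      nlinarith
    have c2 : 3 * (l * t) * ((n / 2) ^ 2 * t) ≤ η' * ((n / 2) ^ 2 * t) := by gcongr
    nlinarith
  nlinarith

theorem err_le {η' l n : ℝ} (hη : 0 < η') (hn : 0 < n) (h1 : 1 ≤ l) (h3 : 3 ≤ η' * l)
    (h12 : 12 * l ^ 4 ≤ η' * n) :
    n * (l * (1 / (n * l ^ 3) + 2 / (1 / l ^ 2 * (n / 2) ^ 2))) ≤ η' := by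
  have hl : 0 < l := by linarith
  have e : n * (l * (1 / (n * l ^ 3) + 2 / (1 / l ^ 2 * (n / 2) ^ 2))) =
      1 / l ^ 2 + 8 * l ^ 3 / n := by
    field_simp
    ring
  rw [e]
  have a : 1 / l ^ 2 ≤ η' / 3 := by
    rw [div_le_div_iff₀ (by positivity) (by norm_num)]
    nlinarith
  have b : 8 * l ^ 3 / n ≤ η' * (2 / 3) := by
    rw [div_le_iff₀ hn]
    have : l ^ 3 ≤ l ^ 4 := pow_le_pow_right₀ h1 (by norm_num)
    linarith
  linarith

theorem Pr_nonneg {n : ℕ} (p : Ord n → Prop) : 0 ≤ Pr p := by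
  unfold Pr
  positivity

theorem final_alg {ι : Type*} (Y Z : Finset ι) (w : ι → ℝ) (η' Err N : ℝ)
    (hw : ∀ v, 0 ≤ w v) (hη0 : 0 ≤ η') (hη1 : η' ≤ 1) (hE : 0 ≤ Err) (hN : (#Y : ℝ) ≤ N)
    (hNE : N * Err ≤ η') (h1 : 1 ≤ ∑ v ∈ Y, w v + ∑ v ∈ Z, w v)
    (hc : ∀ y ∈ Y, ∀ z ∈ Z, (1 - η') * w y - Err ≤ w z) :
    (1 - 2 * η') * #Z ≤ (∑ v ∈ Z, w v) * (#Y + #Z) := by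
  set S := ∑ v ∈ Z, w v with hS
  set T := ∑ v ∈ Y, w v with hT
  have hS0 : 0 ≤ S := Finset.sum_nonneg fun v _ => hw v
  have k1 : ∀ y ∈ Y, #Z * ((1 - η') * w y - Err) ≤ S := by
    intro y hy
    have := Finset.sum_le_sum (hc y hy)
    rwa [Finset.sum_const, nsmul_eq_mul] at this
  have k2 := Finset.sum_le_sum k1
  rw [Finset.sum_const, nsmul_eq_mul, ← Finset.mul_sum, Finset.sum_sub_distrib, ← Finset.mul_sum,
    Finset.sum_const, nsmul_eq_mul, ← hT] at k2
  have hZ : (0:ℝ) ≤ #Z := by positivity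
  have k3 : (#Y : ℝ) * Err ≤ η' := le_trans (by gcongr) hNE
  have k4 : (#Z : ℝ) * ((1 - η') * (1 - S) - η') ≤ #Z * ((1 - η') * T - #Y * Err) := by
    apply mul_le_mul_of_nonneg_left _ hZ
    have : (1 - η') * (1 - S) ≤ (1 - η') * T := by
      apply mul_le_mul_of_nonneg_left _ (by linarith)
      linarith
    linarith
  have k5 : 0 ≤ (#Z : ℝ) * (η' * S) := by positivity
  nlinarith

theorem main_thm (C : ℝ) (hC : 0 < C) (η : ℝ) (hη : 0 < η) :
    ∃ n₀ : ℕ, ∀ n : ℕ, n₀ ≤ n → ∀ m : ℕ, (m : ℝ) ≤ C * n → ∀ hmN : m ≤ numEdges n,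
      ∀ st : Strategy n, ∀ g : Fin m → EdgeType n, Function.Injective g →
        letI L : List (Sym2 (Fin n)) := List.ofFn (fun i : Fin m => ((g i : EdgeType n) : Sym2 (Fin n)))
        letI Ym : Finset (Fin n) := (Finset.univ : Finset (Fin n)).filter
          (fun v => deg (buyList st L) v = 0 ∧ 1 ≤ deg L.toFinset v)
        letI Zm : Finset (Fin n) := (Finset.univ : Finset (Fin n)).filter
          (fun v => deg L.toFinset v = 0)
        (Ym ∪ Zm).Nonempty →
        (∀ v : Fin n, (deg L.toFinset v : ℝ) ≤ 10 * Real.log n) →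
        (∀ σ : Ord n, (∀ i : Fin m, σ (Fin.castLE hmN i) = g i) →
          ∀ j : ℕ, m ≤ j → ∀ hj : j < numEdges n,
            (st (prefixList σ (j + 1)) = true ↔
              ∃ w ∈ ((σ ⟨j, hj⟩ : EdgeType n) : Sym2 (Fin n)), deg (buy st σ j) w = 0)) →
        (1 - η) * (Zm.card : ℝ) / ((Ym.card : ℝ) + (Zm.card : ℝ)) ≤
          CondPr (fun σ => ∀ v : Fin n, 1 ≤ deg (buy st σ (tau 1 σ)) v)
            (fun σ => ∀ i : Fin m, σ (Fin.castLE hmN i) = g i) := by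
  obtain ⟨n₀, hn₀⟩ := params (half_pos hη)
  refine ⟨n₀, fun n hn m _ hmN st g hg hne hdeg hst => ?_⟩
  obtain ⟨p2, p1, p3, p12, pn⟩ := hn₀ n hn
  have hnpos : (0:ℝ) < n := by
    have : 0 < n := by omega
    exact_mod_cast this
  have hcn : 0 ≤ CondPr (fun σ => ∀ v : Fin n, 1 ≤ deg (buy st σ (tau 1 σ)) v)
            (fun σ => ∀ i : Fin m, σ (Fin.castLE hmN i) = g i) := by
    unfold CondPr
    exact div_nonneg (Pr_nonneg _) (Pr_nonneg _)
  by_cases hη1 : 1 ≤ η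
  · refine le_trans ?_ hcn
    apply div_nonpos_of_nonpos_of_nonneg
    · exact mul_nonpos_of_nonpos_of_nonneg (by linarith) (by positivity)
    · positivity
  push Not at hη1
  set l := 10 * Real.log n with hl
  set L := List.ofFn (fun i : Fin m => ((g i : EdgeType n) : Sym2 (Fin n))) with hL
  set Y := (Finset.univ : Finset (Fin n)).filter
          (fun v => deg (buyList st L) v = 0 ∧ 1 ≤ deg L.toFinset v) with hY
  set Z := (Finset.univ : Finset (Fin n)).filter (fun v => deg L.toFinset v = 0) with hZ
  have hZm : ∀ v, v ∈ Z ↔ deg L.toFinset v = 0 := fun v => by simp [hZ]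
  have hYm : ∀ v, v ∈ Y ↔ deg (buyList st L) v = 0 ∧ 1 ≤ deg L.toFinset v := fun v => by simp [hY]
  have hdisj : Disjoint Y Z := by
    rw [Finset.disjoint_left]
    intro v h1 h2
    rw [hYm] at h1
    rw [hZm] at h2
    omega
  have hUR : unc (Y ∪ Z) (Rg g) = ∅ := by
    rw [Finset.eq_empty_iff_forall_notMem]
    intro v hv
    have h1 := deg_in g v (hdeg v) pn
    have h2 : (0:ℝ) < #((Rg g).filter (fun e => v ∈ e.1)) := by linarith
    have h3 : 0 < #((Rg g).filter (fun e => v ∈ e.1)) := by exact_mod_cast h2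
    obtain ⟨e, he⟩ := Finset.card_pos.1 h3
    rw [Finset.mem_filter] at he
    exact (mem_unc.1 hv).2 e he.1 he.2
  have hone := one_le_sum hmN g hg hne hUR
  rw [← sum_wv, Finset.sum_union hdisj] at hone
  have hcond := sum_le_cond hmN g hg (Y ∪ Z) Z
    (fun σ => ∀ v : Fin n, 1 ≤ deg (buy st σ (tau 1 σ)) v) (by
      intro σ hσ F e hf hc ⟨z, hz, hzu⟩ v
      refine event_of p2 st hσ (hst σ (mem_Om.1 hσ)) (Y ∪ Z) ?_ hf hc z hzu ((hZm z).1 hz) v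
      intro u hu
      rw [Finset.mem_union, hYm, hZm] at hu
      change 1 ≤ deg (buyList st L) u
      omega)
  have hsum := (sum_wv_le (Rg g) (Y ∪ Z) Z).trans hcond
  refine le_trans ?_ hsum
  have hYc : (#Y : ℝ) ≤ n := by
    have := Finset.card_le_univ Y
    rw [Fintype.card_fin] at this
    exact_mod_cast this
  have hl0 : 0 < l := by linarith
  have hfin := final_alg Y Z (wv (Rg g) (Y ∪ Z) (fun _ => True)) (η / 2)
    (l * (1 / (n * l ^ 3) + 2 / (1 / l ^ 2 * ((n : ℝ) / 2) ^ 2))) n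
    (wv_nonneg _ _ _) (by linarith) (by linarith) (by positivity) hYc
    (err_le (half_pos hη) hnpos p1 p3 p12) hone (by
      intro y hy z hz
      refine wv_compare (Rg g) (Y ∪ Z) y z (Finset.mem_union_left _ hy) (Finset.mem_union_right _ hz)
        ?_ (by positivity) (by positivity) (by positivity) (by positivity)
        (cond_t (half_pos hη) hnpos p1 p3 p12) ?_ (deg_in g y (hdeg y) pn)
        (fun v hv => deg_in2 g v y hv (hdeg v) pn)
      · intro e hze
        by_contra heR
        have h1 := deg_out g z
        have h2 : 0 < #(Finset.univ.filter (fun e : EdgeType n => e ∉ Rg g ∧ z ∈ e.1)) :=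
          Finset.card_pos.2 ⟨e, by simp [heR, hze]⟩
        have h3 : deg (List.ofFn (fun i : Fin m => (g i).1)).toFinset z = 0 := (hZm z).1 hz
        omega
      · refine le_trans ?_ (hdeg y)
        exact_mod_cast deg_out g y)
  have hpos : (0:ℝ) < (#Y : ℝ) + #Z := by
    have h1 := Finset.card_pos.2 hne
    have h2 := Finset.card_union_le Y Z
    have h3 : 0 < #Y + #Z := by omega
    exact_mod_cast h3
  rw [div_le_iff₀ hpos]
  have : 1 - 2 * (η / 2) = 1 - η := by ring
  rw [this] at hfin
  exact hfin

/-- Let `C > 0`. For every `η > 0` there is `n₀` such that for all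
`n ≥ n₀`, every `m ≤ Cn`, every deterministic online strategy, and every realization
`g` of the first `m` edges with `Y_m ∪ Z_m ≠ ∅` and `Δ(G_{n,m}) ≤ 10·log n`: if from
step `m+1` on the strategy purchases `e_j` if and only if at least one endpoint of
`e_j` is isolated in `B_{j−1}`, then the conditional probability (given `e_1, …, e_m`)
that `B_{τ_1}` has no isolated vertex is at least `(1 − η)·|Z_m| / (|Y_m| + |Z_m|)`. -/
theorem no_isolated_vertex_cond_prob (C : ℝ) (hC : 0 < C) (η : ℝ) (hη : 0 < η) :
    ∃ n₀ : ℕ, ∀ n : ℕ, n₀ ≤ n → ∀ m : ℕ, (m : ℝ) ≤ C * n → ∀ hmN : m ≤ numEdges n,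
      ∀ st : Strategy n, ∀ g : Fin m → EdgeType n, Function.Injective g →
        letI L : List (Sym2 (Fin n)) := List.ofFn (fun i : Fin m => ((g i : EdgeType n) : Sym2 (Fin n)))
        letI Ym : Finset (Fin n) := (Finset.univ : Finset (Fin n)).filter
          (fun v => deg (buyList st L) v = 0 ∧ 1 ≤ deg L.toFinset v)
        letI Zm : Finset (Fin n) := (Finset.univ : Finset (Fin n)).filter
          (fun v => deg L.toFinset v = 0)
        (Ym ∪ Zm).Nonempty →
        (∀ v : Fin n, (deg L.toFinset v : ℝ) ≤ 10 * Real.log n) →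
        (∀ σ : Ord n, (∀ i : Fin m, σ (Fin.castLE hmN i) = g i) →
          ∀ j : ℕ, m ≤ j → ∀ hj : j < numEdges n,
            (st (prefixList σ (j + 1)) = true ↔
              ∃ w ∈ ((σ ⟨j, hj⟩ : EdgeType n) : Sym2 (Fin n)), deg (buy st σ j) w = 0)) →
        (1 - η) * (Zm.card : ℝ) / ((Ym.card : ℝ) + (Zm.card : ℝ)) ≤
          CondPr (fun σ => ∀ v : Fin n, 1 ≤ deg (buy st σ (tau 1 σ)) v)
            (fun σ => ∀ i : Fin m, σ (Fin.castLE hmN i) = g i) := by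
  exact main_thm C hC η hη

end RGP
end

section
/- Let C > 0 and δ > 0 be constants and suppose Builder follows any deterministic online strategy. Then for every η > 0, with high probability at least one of the following holds: (i) |Y_i| > δn for some i ≤ ⌊Cn⌋; or (ii) Builder has purchased at least (3/4 − 6δC − δ − 2e^{−C} − η)·n edges among e_1, …, e_{⌊Cn⌋}. -/
open Finset Filter

namespace RGP

/-! ### Isolated vertices, bad vertices, costs -/

/-- vertices isolated in `G_{n,i}` -/
def iso {n : ℕ} (σ : Ord n) (i : ℕ) : Finset (Fin n) :=
  univ.filter (fun v => deg (procEdges σ i) v = 0)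

/-- the set `Y_i` -/
def badY {n : ℕ} (st : Strategy n) (σ : Ord n) (i : ℕ) : Finset (Fin n) :=
  univ.filter (fun v => deg (buy st σ i) v = 0 ∧ 1 ≤ deg (procEdges σ i) v)

/-- number of endpoints of `e` in `I` -/
def hits {n : ℕ} (I : Finset (Fin n)) (e : Sym2 (Fin n)) : ℕ :=
  (I.filter (fun v => v ∈ e)).card

open scoped Classical in
/-- one step cost -/
noncomputable def cost {n : ℕ} (δ : ℝ) (I Y : Finset (Fin n)) (e : Sym2 (Fin n)) : ℝ :=
  (if ∀ v ∈ e, v ∈ I then 1 else 0) + (if (Y.card : ℝ) ≤ δ * n ∧ ∃ v ∈ e, v ∈ Y then 1 else 0)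

/-- accumulated cost -/
noncomputable def acc {n : ℕ} (st : Strategy n) (δ : ℝ) (σ : Ord n) : ℕ → ℝ
  | 0 => 0
  | i + 1 => acc st δ σ i +
      if h : i < numEdges n then cost δ (iso σ i) (badY st σ i) (σ ⟨i, h⟩).1 else 0

/-- the supermartingale -/
noncomputable def mart {n : ℕ} (st : Strategy n) (δ : ℝ) (m : ℕ) (i : ℕ) (σ : Ord n) : ℝ :=
  ((iso σ i).card : ℝ) ^ 2 / (4 * n) + acc st δ σ i
    + Real.exp (2 * ((i : ℝ) - m) / n) * (iso σ i).card - i * (1 / n + 3 * δ)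

/-! ### Dependence on prefixes -/

/-- agreement on the first `i` positions -/
def Agree {n : ℕ} (i : ℕ) (σ τ : Ord n) : Prop := ∀ k : Fin (numEdges n), (k : ℕ) < i → σ k = τ k

lemma Agree.mono {n i j : ℕ} {σ τ : Ord n} (h : Agree i σ τ) (hj : j ≤ i) : Agree j σ τ :=
  fun k hk => h k (hk.trans_le hj)

lemma Agree.procEdges {n i : ℕ} {σ τ : Ord n} (h : Agree i σ τ) :
    procEdges σ i = procEdges τ i := by
  unfold RGP.procEdges
  apply Finset.image_congr
  intro k hk
  simp at hk
  simp [h k hk]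

lemma Agree.prefixList {n i : ℕ} {σ τ : Ord n} (h : Agree i σ τ) :
    prefixList σ i = prefixList τ i := by
  unfold RGP.prefixList
  apply List.filterMap_congr
  intro j hj
  simp at hj
  split_ifs with h1
  · rw [h ⟨j, h1⟩ hj]
  · rfl

lemma Agree.buy {n i : ℕ} (st : Strategy n) {σ τ : Ord n} (h : Agree i σ τ) :
    buy st σ i = buy st τ i := by
  induction i with
  | zero => rfl
  | succ i ih =>
    simp only [RGP.buy]
    rw [h.prefixList, ih (h.mono (Nat.le_succ i))]
    split_ifs with h1
    · rw [h ⟨i, h1⟩ (Nat.lt_succ_self i)]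
    all_goals rfl

lemma Agree.iso {n i : ℕ} {σ τ : Ord n} (h : Agree i σ τ) : iso σ i = iso τ i := by
  unfold RGP.iso; rw [h.procEdges]

lemma Agree.badY {n i : ℕ} (st : Strategy n) {σ τ : Ord n} (h : Agree i σ τ) :
    badY st σ i = badY st τ i := by
  unfold RGP.badY; rw [h.procEdges, h.buy]

lemma Agree.acc {n i : ℕ} (st : Strategy n) (δ : ℝ) {σ τ : Ord n} (h : Agree i σ τ) :
    acc st δ σ i = acc st δ τ i := by
  induction i with
  | zero => rfl
  | succ i ih =>
    have h' := h.mono (Nat.le_succ i)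
    simp only [RGP.acc]
    rw [ih h', h'.iso, h'.badY]
    split_ifs with h1
    · rw [h ⟨i, h1⟩ (Nat.lt_succ_self i)]
    · rfl

lemma Agree.mart {n i : ℕ} (st : Strategy n) (δ : ℝ) (m : ℕ) {σ τ : Ord n} (h : Agree i σ τ) :
    mart st δ m i σ = mart st δ m i τ := by
  unfold RGP.mart; rw [h.acc, h.iso]

/-- swapping positions -/
def sw {n : ℕ} (i k : Fin (numEdges n)) (σ : Ord n) : Ord n := (Equiv.swap i k).trans σ

lemma sw_agree {n : ℕ} {i k : Fin (numEdges n)} (hik : i ≤ k) (σ : Ord n) :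
    Agree (i : ℕ) (sw i k σ) σ := by
  intro j hj
  have h1 : j ≠ i := fun h => by simp [h] at hj
  have h2 : j ≠ k := fun h => by subst h; exact absurd hj (not_lt.2 hik)
  simp [sw, Equiv.swap_apply_of_ne_of_ne h1 h2]

lemma sw_apply {n : ℕ} (i k : Fin (numEdges n)) (σ : Ord n) : sw i k σ i = σ k := by
  simp [sw]

lemma sum_sw {n : ℕ} (i k : Fin (numEdges n)) (F : Ord n → ℝ) :
    ∑ σ, F (sw i k σ) = ∑ σ, F σ := by
  have hinv : Function.Involutive (sw (n := n) i k) := by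
    intro σ
    ext j
    simp [sw]
  exact Equiv.sum_comp hinv.toPerm F

/-! ### Exponential supermartingale inequality -/

lemma exp_step {n m : ℕ} (M : ℕ → Ord n → ℝ) (K l : ℝ) (hl : 0 ≤ l) (hlK : l * K ≤ 1)
    (hm : m ≤ numEdges n)
    (had0 : ∀ i k : Fin (numEdges n), ∀ σ, M 0 (sw i k σ) = M 0 σ)
    (had : ∀ i : Fin (numEdges n), ∀ k, i ≤ k → ∀ σ, M i (sw i k σ) = M i σ)
    (hb : ∀ i < m, ∀ σ, |M (i + 1) σ - M i σ| ≤ K)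
    (hs : ∀ i : Fin (numEdges n), (i : ℕ) < m → ∀ σ,
      ∑ k ∈ univ.filter (fun k => i ≤ k), (M (i + 1) (sw i k σ) - M i (sw i k σ)) ≤ 0)
    (i : ℕ) (hi : i ≤ m) :
    ∑ σ, Real.exp (l * (M i σ - M 0 σ)) ≤ Real.exp (l ^ 2 * K ^ 2 * i) * Fintype.card (Ord n) := by
  induction i with
  | zero => simp
  | succ i ih =>
    have hiN : i < numEdges n := by omega
    set a : Fin (numEdges n) := ⟨i, hiN⟩ with ha
    set R := univ.filter (fun k => a ≤ k) with hR
    have hRpos : 0 < (R.card : ℝ) := by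
      have : a ∈ R := by simp [hR]
      exact_mod_cast Finset.card_pos.2 ⟨a, this⟩
    have key : ∀ σ, ∑ k ∈ R, Real.exp (l * (M (i+1) (sw a k σ) - M 0 (sw a k σ)))
        ≤ R.card * (Real.exp (l ^ 2 * K ^ 2) * Real.exp (l * (M i σ - M 0 σ))) := by
      intro σ
      have h1 : ∀ k ∈ R, Real.exp (l * (M (i+1) (sw a k σ) - M 0 (sw a k σ))) ≤
          Real.exp (l * (M i σ - M 0 σ)) *
            (1 + l * (M (i+1) (sw a k σ) - M i (sw a k σ)) + l ^ 2 * K ^ 2) := by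
        intro k hk
        have hk' : a ≤ k := by simpa [hR] using hk
        have e1 := had a k hk' σ
        have e2 := had0 a k σ
        simp only [ha] at e1
        have hbb := hb i (by omega) (sw a k σ)
        set D := M (i+1) (sw a k σ) - M i (sw a k σ) with hD
        have hK : 0 ≤ K := (abs_nonneg _).trans hbb
        have : l * (M (i+1) (sw a k σ) - M 0 (sw a k σ)) = l * (M i σ - M 0 σ) + l * D := by
          rw [hD, e2, ← e1]; ring
        rw [this, Real.exp_add]
        refine mul_le_mul_of_nonneg_left ?_ (Real.exp_pos _).le
        have hab : |l * D| ≤ l * K := by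
          rw [abs_mul, abs_of_nonneg hl]; exact mul_le_mul_of_nonneg_left hbb hl
        have h3 := Real.abs_exp_sub_one_sub_id_le (hab.trans hlK)
        have h4 := (abs_le.1 h3).2
        have h5 : (l * D) ^ 2 ≤ (l * K) ^ 2 := sq_le_sq' (by linarith [(abs_le.1 hab).1])
          (abs_le.1 hab).2
        nlinarith
      refine (Finset.sum_le_sum h1).trans ?_
      rw [← Finset.mul_sum]
      have h2 := hs a (by simp [ha]; omega) σ
      have h3 : ∑ k ∈ R, (1 + l * (M (i+1) (sw a k σ) - M i (sw a k σ)) + l ^ 2 * K ^ 2)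
          ≤ R.card * Real.exp (l ^ 2 * K ^ 2) := by
        rw [Finset.sum_add_distrib, Finset.sum_add_distrib, ← Finset.mul_sum]
        simp only [Finset.sum_const, nsmul_eq_mul]
        have h4 := Real.add_one_le_exp (l ^ 2 * K ^ 2)
        have h5 := mul_nonpos_of_nonneg_of_nonpos hl h2
        have h6 := mul_le_mul_of_nonneg_left h4 hRpos.le
        simp only [ha] at h5
        simp only [hR, ha] at h6 ⊢
        linarith
      calc _ ≤ Real.exp (l * (M i σ - M 0 σ)) * (R.card * Real.exp (l ^ 2 * K ^ 2)) :=
            mul_le_mul_of_nonneg_left h3 (Real.exp_pos _).le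
        _ = _ := by ring
    have hsum := Finset.sum_le_sum (fun σ (_ : σ ∈ (univ : Finset (Ord n))) => key σ)
    rw [Finset.sum_comm] at hsum
    have h7 : ∀ k ∈ R, ∑ σ, Real.exp (l * (M (i+1) (sw a k σ) - M 0 (sw a k σ))) =
        ∑ σ, Real.exp (l * (M (i+1) σ - M 0 σ)) := fun k _ =>
      sum_sw a k (fun σ => Real.exp (l * (M (i+1) σ - M 0 σ)))
    rw [Finset.sum_congr rfl h7, Finset.sum_const, nsmul_eq_mul, ← Finset.mul_sum,
      mul_le_mul_iff_right₀ hRpos, ← Finset.mul_sum] at hsum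
    refine hsum.trans ?_
    calc _ ≤ Real.exp (l ^ 2 * K ^ 2) * (Real.exp (l ^ 2 * K ^ 2 * i) * Fintype.card (Ord n)) :=
          mul_le_mul_of_nonneg_left (ih (by omega)) (Real.exp_pos _).le
      _ = _ := by
          rw [← mul_assoc, ← Real.exp_add]; push_cast; ring_nf

lemma deg_eq_zero {n : ℕ} (S : Finset (Sym2 (Fin n))) (v : Fin n) :
    deg S v = 0 ↔ ∀ e ∈ S, v ∉ e := by
  simp [deg, Finset.card_eq_zero, Finset.filter_eq_empty_iff]

lemma procEdges_succ {n i : ℕ} (σ : Ord n) (h : i < numEdges n) :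
    procEdges σ (i + 1) = insert (σ ⟨i, h⟩).1 (procEdges σ i) := by
  have : (univ.filter (fun k : Fin (numEdges n) => (k : ℕ) < i + 1)) =
      insert ⟨i, h⟩ (univ.filter (fun k : Fin (numEdges n) => (k : ℕ) < i)) := by
    ext k
    simp [Fin.ext_iff]
    omega
  unfold procEdges
  rw [this, Finset.image_insert]

lemma iso_succ {n i : ℕ} (σ : Ord n) (h : i < numEdges n) :
    iso σ (i + 1) = (iso σ i).filter (fun v => v ∉ (σ ⟨i, h⟩).1) := by
  ext v
  simp only [iso, procEdges_succ σ h, deg_eq_zero, Finset.mem_filter, Finset.mem_univ, true_and,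
    Finset.mem_insert, forall_eq_or_imp]
  tauto

lemma iso_card_succ {n i : ℕ} (σ : Ord n) (h : i < numEdges n) :
    ((iso σ (i + 1)).card : ℝ) = (iso σ i).card - hits (iso σ i) (σ ⟨i, h⟩).1 := by
  rw [iso_succ σ h, eq_sub_iff_add_eq]
  unfold hits
  have := Finset.card_filter_add_card_filter_not (s := iso σ i) (fun v => v ∈ (σ ⟨i, h⟩).1)
  rw [add_comm] at this
  exact_mod_cast this

lemma hits_le_two {n : ℕ} (I : Finset (Fin n)) (e : Sym2 (Fin n)) : hits I e ≤ 2 := by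
  induction e with
  | _ a b =>
    refine (Finset.card_le_card (t := {a, b}) ?_).trans Finset.card_le_two
    intro v hv
    simp at hv
    simp [hv.2]

lemma cost_nonneg {n : ℕ} (δ : ℝ) (I Y : Finset (Fin n)) (e : Sym2 (Fin n)) :
    0 ≤ cost δ I Y e := by
  unfold cost; split_ifs <;> norm_num

lemma cost_le_two {n : ℕ} (δ : ℝ) (I Y : Finset (Fin n)) (e : Sym2 (Fin n)) :
    cost δ I Y e ≤ 2 := by
  unfold cost; split_ifs <;> norm_num

/-- number of edges at a vertex -/
lemma card_edges_at {n : ℕ} (v : Fin n) :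
    (univ.filter (fun e : EdgeType n => v ∈ e.1)).card = n - 1 := by
  have : (univ.filter (fun e : EdgeType n => v ∈ e.1)).card = (univ.erase v : Finset (Fin n)).card := by
    symm
    refine Finset.card_bij (fun w hw => ⟨s(v, w), ?_⟩) ?_ ?_ ?_
    · simp at hw ⊢; exact fun h => hw h.symm
    · intro w hw; simp
    · intro w hw w' hw' h
      simp at h
      rcases h with h | ⟨h1, h2⟩
      · exact h
      · exact h2.trans h1
    · rintro ⟨e, he⟩ hv
      simp at hv
      obtain ⟨w, rfl⟩ := hv
      refine ⟨w, ?_, rfl⟩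
      simp at he ⊢
      exact fun h => he h.symm
  rw [this, Finset.card_erase_of_mem (Finset.mem_univ v)]
  simp

lemma card_pos_at {n : ℕ} (σ : Ord n) (v : Fin n) :
    (univ.filter (fun k => v ∈ (σ k).1)).card = n - 1 := by
  rw [← card_edges_at v]
  refine Finset.card_bij (fun k _ => σ k) ?_ ?_ ?_
  · intro k hk; simpa using hk
  · intro k _ k' _ h; exact σ.injective h
  · intro e he
    refine ⟨σ.symm e, ?_, ?_⟩
    · simpa using he
    · simp

lemma not_mem_of_iso {n : ℕ} {σ : Ord n} {i : ℕ} {v : Fin n} (hv : v ∈ iso σ i)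
    (k : Fin (numEdges n)) (hk : (k : ℕ) < i) : v ∉ (σ k).1 := by
  simp only [iso, deg_eq_zero, Finset.mem_filter, Finset.mem_univ, true_and] at hv
  apply hv
  simp only [procEdges, Finset.mem_image, Finset.mem_filter, Finset.mem_univ, true_and]
  exact ⟨k, hk, rfl⟩

lemma sum_hits {n : ℕ} (σ : Ord n) (a : Fin (numEdges n)) :
    ∑ k ∈ univ.filter (fun k => a ≤ k), hits (iso σ a) (σ k).1 = (iso σ a).card * (n - 1) := by
  unfold hits
  simp only [Finset.card_filter _ (iso σ a)]
  rw [Finset.sum_comm]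
  rw [Finset.sum_const_nat]
  intro v hv
  rw [← card_pos_at σ v, Finset.card_filter, Finset.sum_filter]
  refine Finset.sum_congr rfl ?_
  intro k _
  by_cases hk : a ≤ k
  · simp [hk]
  · have := not_mem_of_iso hv k (by simpa using hk)
    simp [this]

lemma card_inside {n : ℕ} (I : Finset (Fin n)) (σ : Ord n) :
    ((univ.filter (fun k => ∀ v ∈ (σ k).1, v ∈ I)).card : ℝ) ≤ (I.card : ℝ) * (I.card - 1) / 2 := by
  rw [← Nat.cast_choose_two, ← Sym2.card_image_offDiag]
  norm_cast
  refine Finset.card_le_card_of_injOn (fun k => (σ k).1) ?_ ?_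
  · intro k hk
    have hnd := (σ k).2
    simp only [Finset.coe_filter, Finset.mem_univ, true_and, Set.mem_ofPred_eq] at hk
    simp only [Finset.coe_image, Set.mem_image, Finset.mem_coe, Finset.mem_offDiag]
    generalize (σ k).1 = e at hk hnd
    induction e with
    | _ a b =>
      refine ⟨(a, b), ⟨hk a (by simp), hk b (by simp), ?_⟩, rfl⟩
      simpa using hnd
  · intro k _ k' _ h
    exact σ.injective (Subtype.ext h)

lemma card_meet {n : ℕ} (Y : Finset (Fin n)) (σ : Ord n) :
    (univ.filter (fun k => ∃ v ∈ (σ k).1, v ∈ Y)).card ≤ Y.card * (n - 1) := by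
  refine (Finset.card_le_card (t := Y.biUnion (fun v => univ.filter (fun k => v ∈ (σ k).1))) ?_).trans ?_
  · intro k hk
    simp at hk ⊢
    obtain ⟨v, h1, h2⟩ := hk
    exact ⟨v, h2, h1⟩
  · exact Finset.card_biUnion_le_card_mul _ _ _ (fun v _ => (card_pos_at σ v).le)

lemma two_numEdges (n : ℕ) : (2 : ℝ) * numEdges n = n * (n - 1) := by
  have h : numEdges n = n.choose 2 := by rw [Nat.choose_two_right]; rfl
  rw [h, Nat.cast_choose_two]; ring

lemma card_ord_pos (n : ℕ) : 0 < Fintype.card (Ord n) := by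
  have : Fintype.card (Fin (numEdges n)) = Fintype.card (EdgeType n) := by
    rw [Sym2.card_subtype_not_diag, Fintype.card_fin, Fintype.card_fin, Nat.choose_two_right]
    rfl
  exact Fintype.card_pos_iff.2 ⟨Fintype.equivOfCardEq this⟩

lemma sum_cost {n : ℕ} (δ : ℝ) (hδ : 0 ≤ δ) (I Y : Finset (Fin n)) (σ : Ord n)
    (R : Finset (Fin (numEdges n))) (hn : 1 ≤ n) :
    ∑ k ∈ R, cost δ I Y (σ k).1 ≤ (I.card : ℝ) * (I.card - 1) / 2 + δ * (2 * numEdges n) := by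
  classical
  refine (Finset.sum_le_sum_of_subset_of_nonneg (Finset.subset_univ R)
    (fun k _ _ => cost_nonneg _ _ _ _)).trans ?_
  unfold cost
  rw [Finset.sum_add_distrib]
  refine add_le_add ?_ ?_
  · refine le_trans (le_of_eq ?_) (card_inside I σ)
    rw [Finset.sum_boole]
  · by_cases hY : (Y.card : ℝ) ≤ δ * n
    · simp only [hY, true_and]
      rw [Finset.sum_boole, two_numEdges]
      have h1 : ((univ.filter (fun k => ∃ v ∈ (σ k).1, v ∈ Y)).card : ℝ) ≤ Y.card * (n - 1) := by
        have := card_meet Y σ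
        have h2 : ((n - 1 : ℕ) : ℝ) = n - 1 := by push_cast [hn]; ring
        rw [← h2]; exact_mod_cast this
      have h3 : (0 : ℝ) ≤ n - 1 := by
        have : (1 : ℝ) ≤ n := by exact_mod_cast hn
        linarith
      have h4 := mul_le_mul_of_nonneg_right hY h3
      refine h1.trans (h4.trans (le_of_eq (by ring)))
    · simp only [hY, false_and, if_false, Finset.sum_const_zero]
      positivity

lemma iso_card_le {n : ℕ} (σ : Ord n) (i : ℕ) : ((iso σ i).card : ℝ) ≤ n := by
  have := Finset.card_le_univ (iso σ i)
  simp at this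
  exact_mod_cast this

/-- increment of the supermartingale -/
lemma mart_incr {n : ℕ} (st : Strategy n) (δ : ℝ) (m : ℕ) (i : ℕ) (h : i < numEdges n) (σ : Ord n) :
    mart st δ m (i + 1) σ - mart st δ m i σ =
      (-2 * (iso σ i).card * hits (iso σ i) (σ ⟨i, h⟩).1 + (hits (iso σ i) (σ ⟨i, h⟩).1 : ℝ) ^ 2) / (4 * n)
      + cost δ (iso σ i) (badY st σ i) (σ ⟨i, h⟩).1
      + ((Real.exp (2 * ((i + 1 : ℝ) - m) / n) - Real.exp (2 * ((i : ℝ) - m) / n)) * (iso σ i).card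
        - Real.exp (2 * ((i + 1 : ℝ) - m) / n) * hits (iso σ i) (σ ⟨i, h⟩).1)
      - (1 / n + 3 * δ) := by
  unfold mart
  rw [iso_card_succ σ h]
  simp only [acc, h, dif_pos]
  push_cast
  ring

lemma alpha_diff {n : ℕ} (hn : 1 ≤ n) (x : ℝ) :
    Real.exp (2 * (x + 1) / n) - Real.exp (2 * x / n) ≤ Real.exp (2 * (x + 1) / n) * (2 / n) := by
  have hn' : (0 : ℝ) < n := by exact_mod_cast hn
  have h1 : Real.exp (2 * x / n) = Real.exp (2 * (x + 1) / n) * Real.exp (-(2 / n)) := by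
    rw [← Real.exp_add]; congr 1; field_simp; ring
  have h2 := Real.add_one_le_exp (-(2 / (n : ℝ)))
  rw [h1]
  have h3 := mul_le_mul_of_nonneg_left h2 (Real.exp_pos (2 * (x + 1) / n)).le
  linarith

lemma mart_bound {n : ℕ} (hn : 1 ≤ n) (st : Strategy n) (δ : ℝ) (hδ : 0 ≤ δ) (m : ℕ) (i : ℕ)
    (h : i < numEdges n) (him : i < m) (σ : Ord n) :
    |mart st δ m (i + 1) σ - mart st δ m i σ| ≤ 10 + 3 * δ := by
  rw [mart_incr st δ m i h σ]
  have hn' : (1 : ℝ) ≤ n := by exact_mod_cast hn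
  have hX := iso_card_le σ i
  have hX0 : (0 : ℝ) ≤ (iso σ i).card := by positivity
  have hd : (hits (iso σ i) (σ ⟨i, h⟩).1 : ℝ) ≤ 2 := by exact_mod_cast hits_le_two _ _
  have hd0 : (0 : ℝ) ≤ (hits (iso σ i) (σ ⟨i, h⟩).1 : ℝ) := by positivity
  have hc := cost_nonneg δ (iso σ i) (badY st σ i) (σ ⟨i, h⟩).1
  have hc2 := cost_le_two δ (iso σ i) (badY st σ i) (σ ⟨i, h⟩).1
  generalize cost δ (iso σ i) (badY st σ i) (σ ⟨i, h⟩).1 = c at *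
  generalize (hits (iso σ i) (σ ⟨i, h⟩).1 : ℝ) = d at *
  generalize ((iso σ i).card : ℝ) = X at *
  have ha := alpha_diff hn ((i : ℝ) - m)
  rw [show (i : ℝ) - m + 1 = i + 1 - m by ring] at ha
  have ha1 : Real.exp (2 * ((i + 1 : ℝ) - m) / n) ≤ 1 := by
    rw [Real.exp_le_one_iff]
    have : (i : ℝ) + 1 ≤ m := by exact_mod_cast him
    apply div_nonpos_of_nonpos_of_nonneg <;> linarith
  have ha0 := Real.exp_pos (2 * ((i + 1 : ℝ) - m) / n)
  have ham : Real.exp (2 * ((i : ℝ) - m) / n) ≤ Real.exp (2 * ((i + 1 : ℝ) - m) / n) := by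
    apply Real.exp_le_exp.2
    gcongr
    linarith
  generalize Real.exp (2 * ((i + 1 : ℝ) - m) / n) = u at *
  generalize Real.exp (2 * ((i : ℝ) - m) / n) = w at *
  have hn1 : 1 / (n : ℝ) ≤ 1 := by rw [div_le_one (by linarith)]; exact hn'
  have hn0 : 0 ≤ 1 / (n : ℝ) := by positivity
  have t1 : (u - w) * X ≤ 2 := by
    calc (u - w) * X ≤ (1 * (2 / n)) * n := by
          apply mul_le_mul _ hX hX0 (by positivity)
          exact ha.trans (mul_le_mul_of_nonneg_right ha1 (by positivity))
      _ = 2 := by field_simp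
  have t0 : 0 ≤ (u - w) * X := mul_nonneg (by linarith) hX0
  have t2 : u * d ≤ 2 := by nlinarith
  have t3 : 0 ≤ u * d := by positivity
  have q1 : (-2 * X * d + d ^ 2) / (4 * n) ≤ 1 := by
    rw [div_le_one (by positivity)]; nlinarith [mul_nonneg hX0 hd0]
  have q2 : -1 ≤ (-2 * X * d + d ^ 2) / (4 * n) := by
    rw [le_div_iff₀ (by positivity)]; nlinarith [mul_nonneg hX0 hd0, mul_le_mul hX hd hd0 (by positivity)]
  rw [abs_le]
  constructor <;> linarith

lemma mart_super {n : ℕ} (hn : 1 ≤ n) (st : Strategy n) (δ : ℝ) (hδ : 0 ≤ δ) (m : ℕ)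
    (a : Fin (numEdges n)) (ha : 3 * (a : ℝ) ≤ numEdges n) (σ : Ord n) :
    ∑ k ∈ univ.filter (fun k => a ≤ k),
      (mart st δ m (a + 1) (sw a k σ) - mart st δ m a (sw a k σ)) ≤ 0 := by
  have hn' : (1 : ℝ) ≤ n := by exact_mod_cast hn
  set R := univ.filter (fun k => a ≤ k) with hR
  have hRc : (R.card : ℝ) = numEdges n - a := by
    have : R = Finset.Ici a := by ext k; simp [hR]
    rw [this, Fin.card_Ici, Nat.cast_sub a.2.le]
  set X : ℝ := ((iso σ a).card : ℝ) with hXd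
  set u := Real.exp (2 * (((a : ℕ) + 1 : ℝ) - m) / n) with hu
  set w := Real.exp (2 * (((a : ℕ) : ℝ) - m) / n) with hw
  have hbd : ∀ k ∈ R, mart st δ m (a + 1) (sw a k σ) - mart st δ m a (sw a k σ) ≤
      (1 / n + (u - w) * X - (1 / n + 3 * δ)) + (-(X / (2 * n)) - u) * (hits (iso σ a) (σ k).1 : ℝ)
      + cost δ (iso σ a) (badY st σ a) (σ k).1 := by
    intro k hk
    have hk' : a ≤ k := by simpa [hR] using hk
    have hag := sw_agree hk' σ
    rw [mart_incr st δ m a a.2, hag.iso, hag.badY]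
    simp only [Fin.eta, sw_apply]
    rw [← hXd, ← hu, ← hw]
    have hd : (hits (iso σ a) (σ k).1 : ℝ) ≤ 2 := by exact_mod_cast hits_le_two _ _
    have hd0 : (0 : ℝ) ≤ (hits (iso σ a) (σ k).1 : ℝ) := by positivity
    generalize (hits (iso σ a) (σ k).1 : ℝ) = d at *
    have h1 : (-2 * X * d + d ^ 2) / (4 * n) ≤ 1 / n + -(X / (2 * n)) * d := by
      have : 1 / n + -(X / (2 * n)) * d = (-2 * X * d + 4) / (4 * n) := by field_simp; ring
      rw [this]
      gcongr
      nlinarith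
    linarith
  refine (Finset.sum_le_sum hbd).trans ?_
  rw [Finset.sum_add_distrib, Finset.sum_add_distrib, ← Finset.mul_sum, Finset.sum_const, nsmul_eq_mul]
  have hh : ∑ k ∈ R, (hits (iso σ a) (σ k).1 : ℝ) = X * (n - 1) := by
    have := sum_hits σ a
    have h2 : ((n - 1 : ℕ) : ℝ) = n - 1 := by push_cast [hn]; ring
    rw [← h2, hXd]; exact_mod_cast this
  rw [hh]
  have hcost := sum_cost δ hδ (iso σ a) (badY st σ a) σ R hn
  rw [← hXd] at hcost
  have hX0 : 0 ≤ X := by positivity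
  have hX : X ≤ n := iso_card_le σ a
  have hN := two_numEdges n
  have had := alpha_diff hn (((a : ℕ) : ℝ) - m)
  rw [show ((a : ℕ) : ℝ) - m + 1 = (a : ℕ) + 1 - m by ring, ← hu, ← hw] at had
  have hu0 : 0 < u := Real.exp_pos _
  have hRN : (R.card : ℝ) ≤ numEdges n := by rw [hRc]; linarith [Nat.cast_nonneg (α := ℝ) (a : ℕ)]
  have e1 : (R.card : ℝ) * ((u - w) * X) ≤ u * X * (n - 1) := by
    calc (R.card : ℝ) * ((u - w) * X) ≤ R.card * ((u * (2 / n)) * X) := by gcongr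
      _ ≤ numEdges n * ((u * (2 / n)) * X) := by gcongr
      _ = (2 * numEdges n) * (u * X / n) := by ring
      _ = u * X * (n - 1) := by rw [hN]; field_simp
  have e2 : X * (X - 1) / 2 ≤ X / (2 * n) * (X * (n - 1)) := by
    have : X / (2 * n) * (X * (n - 1)) - X * (X - 1) / 2 = X * (n - X) / (2 * n) := by
      field_simp; ring
    have : 0 ≤ X * (n - X) / (2 * n) := by
      apply div_nonneg (mul_nonneg hX0 (by linarith)) (by linarith)
    linarith
  have e3 : δ * (2 * numEdges n) ≤ R.card * (3 * δ) := by
    rw [hRc]; nlinarith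
  nlinarith

lemma mart_tail {n m : ℕ} (hn : 1 ≤ n) (st : Strategy n) (δ : ℝ) (hδ : 0 ≤ δ)
    (hm : 3 * (m : ℝ) ≤ numEdges n) (l : ℝ) (hl : 0 < l) (hlK : l * (10 + 3 * δ) ≤ 1) (t : ℝ) :
    Pr (fun σ : Ord n => t ≤ mart st δ m m σ - mart st δ m 0 σ) ≤
      Real.exp (l ^ 2 * (10 + 3 * δ) ^ 2 * m - l * t) := by
  classical
  have hmN : m ≤ numEdges n := by
    have : (m : ℝ) ≤ numEdges n := by linarith [Nat.cast_nonneg (α := ℝ) m]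
    exact_mod_cast this
  have h := exp_step (mart st δ m) (10 + 3 * δ) l hl.le hlK hmN
    (fun i k σ => Agree.mart st δ m (fun j hj => absurd hj (Nat.not_lt_zero _)))
    (fun i k hik σ => Agree.mart st δ m (sw_agree hik σ))
    (fun i hi σ => mart_bound hn st δ hδ m i (by omega) hi σ)
    (fun a ha σ => mart_super hn st δ hδ m a (by
      have : ((a : ℕ) : ℝ) ≤ m := by exact_mod_cast ha.le
      linarith) σ) m le_rfl
  unfold Pr
  have hpos : (0 : ℝ) < Fintype.card (Ord n) := by exact_mod_cast card_ord_pos n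
  rw [div_le_iff₀ hpos, sub_eq_add_neg, Real.exp_add, mul_right_comm, Real.exp_neg,
    ← div_eq_mul_inv, le_div_iff₀ (Real.exp_pos _)]
  refine le_trans ?_ h
  rw [← nsmul_eq_mul, ← Finset.sum_const]
  refine (Finset.sum_le_sum ?_).trans
    (Finset.sum_le_sum_of_subset_of_nonneg (Finset.filter_subset _ _) (fun _ _ _ => (Real.exp_pos _).le))
  intro σ hσ
  simp at hσ
  apply Real.exp_le_exp.2
  exact mul_le_mul_of_nonneg_left hσ hl.le

/-- vertices isolated in Builder's graph -/
def bIso {n : ℕ} (st : Strategy n) (σ : Ord n) (i : ℕ) : Finset (Fin n) :=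
  univ.filter (fun v => deg (buy st σ i) v = 0)

lemma bIso_card {n : ℕ} (st : Strategy n) (σ : Ord n) (i : ℕ) :
    (bIso st σ i).card ≤ (iso σ i).card + (badY st σ i).card := by
  refine (Finset.card_le_card ?_).trans (Finset.card_union_le _ _)
  intro v hv
  simp [bIso, iso, badY] at hv ⊢
  omega

lemma buy_subset {n : ℕ} (st : Strategy n) (σ : Ord n) (i : ℕ) : buy st σ i ⊆ procEdges σ i := by
  induction i with
  | zero => simp [buy]
  | succ i ih =>
    have hsub : procEdges σ i ⊆ procEdges σ (i + 1) := by
      apply Finset.image_subset_image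
      intro k hk
      simp at hk ⊢
      omega
    simp only [buy]
    split_ifs with h1 h2
    · rw [procEdges_succ σ h1]; exact Finset.insert_subset_insert _ ih
    · exact ih.trans hsub
    · exact ih.trans hsub

lemma not_mem_proc {n i : ℕ} (σ : Ord n) (h : i < numEdges n) : (σ ⟨i, h⟩).1 ∉ procEdges σ i := by
  intro hm
  simp only [procEdges, Finset.mem_image, Finset.mem_filter, Finset.mem_univ, true_and] at hm
  obtain ⟨k, hk, he⟩ := hm
  have := σ.injective (Subtype.ext he)
  rw [this] at hk
  simp at hk

lemma invariant {n : ℕ} (st : Strategy n) (δ : ℝ) (σ : Ord n) (m : ℕ)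
    (hY : ∀ i ≤ m, ((badY st σ i).card : ℝ) ≤ δ * n) (i : ℕ) (hi : i ≤ m) :
    (n : ℝ) ≤ (bIso st σ i).card + (buy st σ i).card + acc st δ σ i := by
  induction i with
  | zero => simp [bIso, buy, acc, deg]
  | succ i ih =>
    have ih := ih (by omega)
    by_cases h1 : i < numEdges n
    · have hc := cost_nonneg δ (iso σ i) (badY st σ i) (σ ⟨i, h1⟩).1
      by_cases h2 : st (prefixList σ (i + 1))
      · have hb : buy st σ (i + 1) = insert (σ ⟨i, h1⟩).1 (buy st σ i) := by
          simp [buy, h1, h2]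
        have hcard : (buy st σ (i + 1)).card = (buy st σ i).card + 1 := by
          rw [hb, Finset.card_insert_of_notMem]
          exact fun h => not_mem_proc σ h1 (buy_subset st σ i h)
        have hz : bIso st σ (i + 1) = (bIso st σ i).filter (fun v => v ∉ (σ ⟨i, h1⟩).1) := by
          ext v
          simp only [bIso, hb, deg_eq_zero, Finset.mem_filter, Finset.mem_univ, true_and,
            Finset.mem_insert, forall_eq_or_imp]
          tauto
        have hzc : (bIso st σ (i + 1)).card + hits (bIso st σ i) (σ ⟨i, h1⟩).1 = (bIso st σ i).card := by
          rw [hz, add_comm]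
          exact Finset.card_filter_add_card_filter_not (s := bIso st σ i) (fun v => v ∈ (σ ⟨i, h1⟩).1)
        have hkey : (hits (bIso st σ i) (σ ⟨i, h1⟩).1 : ℝ) ≤
            1 + cost δ (iso σ i) (badY st σ i) (σ ⟨i, h1⟩).1 := by
          by_cases hall : ∀ v ∈ (σ ⟨i, h1⟩).1, v ∈ bIso st σ i
          · have h2 : (hits (bIso st σ i) (σ ⟨i, h1⟩).1 : ℝ) ≤ 2 := by exact_mod_cast hits_le_two _ _
            have h3 : 1 ≤ cost δ (iso σ i) (badY st σ i) (σ ⟨i, h1⟩).1 := by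
              unfold cost
              by_cases hI : ∀ v ∈ (σ ⟨i, h1⟩).1, v ∈ iso σ i
              · rw [if_pos hI]; split_ifs <;> norm_num
              · have : ∃ v ∈ (σ ⟨i, h1⟩).1, v ∈ badY st σ i := by
                  push Not at hI
                  obtain ⟨v, hv, hvI⟩ := hI
                  refine ⟨v, hv, ?_⟩
                  have := hall v hv
                  simp [bIso, iso, badY] at this hvI ⊢
                  omega
                rw [if_pos (show _ ∧ _ from ⟨hY i (by omega), this⟩)]
                split_ifs <;> norm_num
            linarith
          · have h2 : hits (bIso st σ i) (σ ⟨i, h1⟩).1 ≤ 1 := by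
              push Not at hall
              generalize (σ ⟨i, h1⟩).1 = e at hall
              obtain ⟨v, hv, hvI⟩ := hall
              obtain ⟨w, rfl⟩ := hv
              refine (Finset.card_le_card (t := {w}) ?_).trans (by simp)
              intro x hx
              simp at hx ⊢
              rcases hx with ⟨hx, rfl | rfl⟩
              · exact absurd hx hvI
              · rfl
            have : (hits (bIso st σ i) (σ ⟨i, h1⟩).1 : ℝ) ≤ 1 := by exact_mod_cast h2
            linarith
        have hzc' : ((bIso st σ (i + 1)).card : ℝ) + hits (bIso st σ i) (σ ⟨i, h1⟩).1
            = (bIso st σ i).card := by exact_mod_cast hzc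
        simp only [acc, h1, dif_pos]
        rw [hcard]; push_cast
        linarith
      · have hb : buy st σ (i + 1) = buy st σ i := by simp [buy, h2]
        have hz : bIso st σ (i + 1) = bIso st σ i := by simp [bIso, hb]
        rw [hb, hz]
        simp only [acc, h1, dif_pos]
        linarith
    · have hb : buy st σ (i + 1) = buy st σ i := by simp [buy, h1]
      have hz : bIso st σ (i + 1) = bIso st σ i := by simp [bIso, hb]
      rw [hb, hz]
      simpa [acc, h1] using ih

lemma mart_zero {n : ℕ} (hn : 1 ≤ n) (st : Strategy n) (δ : ℝ) (m : ℕ) (σ : Ord n) :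
    mart st δ m 0 σ = n / 4 + Real.exp (-(2 * m / n)) * n := by
  have hn' : (0 : ℝ) < n := by exact_mod_cast hn
  have : iso σ 0 = univ := by
    ext v; simp [iso, deg, procEdges]
  unfold mart
  rw [this]
  simp [acc]
  have : -(2 * (m : ℝ)) / n = -(2 * m / n) := by ring
  rw [this]; field_simp

lemma mart_end {n : ℕ} (st : Strategy n) (δ : ℝ) (m : ℕ) (σ : Ord n) :
    acc st δ σ m + (iso σ m).card - m * (1 / n + 3 * δ) ≤ mart st δ m m σ := by
  unfold mart
  have : (0 : ℝ) ≤ ((iso σ m).card : ℝ) ^ 2 / (4 * n) := by positivity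
  simp
  linarith

lemma Pr_le_one {n : ℕ} (p : Ord n → Prop) : Pr p ≤ 1 := by
  classical
  unfold Pr
  apply div_le_one_of_le₀ _ (by positivity)
  exact_mod_cast (Finset.card_le_univ _)

lemma Pr_ge {n : ℕ} (p q : Ord n → Prop) (h : ∀ σ, ¬ p σ → q σ) : 1 - Pr q ≤ Pr p := by
  classical
  unfold Pr
  have hpos : (0 : ℝ) < Fintype.card (Ord n) := by exact_mod_cast card_ord_pos n
  rw [sub_le_iff_le_add, ← add_div, le_div_iff₀ hpos, one_mul]
  norm_cast
  rw [← Finset.card_univ]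
  refine (Finset.card_le_card ?_).trans (Finset.card_union_le _ _)
  intro σ _
  simp
  by_cases hp : p σ
  · exact Or.inl hp
  · exact Or.inr (h σ hp)

/-- Let `C, δ > 0` and suppose Builder follows any deterministic
online strategy. Then, for every `η > 0`, with high probability either `|Y_i| > δn` for
some `i ≤ ⌊Cn⌋`, or Builder has purchased at least `(3/4 − 6δC − δ − 2e^{−C} − η)·n`
edges among `e_1, …, e_{⌊Cn⌋}`. Here
`Y_i = {v : deg_{B_i}(v) = 0 and deg_{G_{n,i}}(v) ≥ 1}`. -/
theorem cheap_strategy_dichotomy (C δ : ℝ) (hC : 0 < C) (hδ : 0 < δ)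
    (st : (n : ℕ) → Strategy n) (η : ℝ) (hη : 0 < η) :
    Filter.Tendsto
      (fun n : ℕ => Pr (fun σ : Ord n =>
        (∃ i : ℕ, i ≤ ⌊C * (n : ℝ)⌋₊ ∧
          δ * n < ((((Finset.univ : Finset (Fin n)).filter
            (fun v => deg (buy (st n) σ i) v = 0 ∧ 1 ≤ deg (procEdges σ i) v)).card : ℝ))) ∨
        (3 / 4 - 6 * δ * C - δ - 2 * Real.exp (-C) - η) * n ≤
          ((buy (st n) σ ⌊C * (n : ℝ)⌋₊).card : ℝ)))
      Filter.atTop (nhds 1) := by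

  obtain ⟨K, hK⟩ : ∃ K : ℝ, K = 10 + 3 * δ := ⟨_, rfl⟩
  have hKpos : 0 < K := by rw [hK]; positivity
  -- choice of the exponential parameter
  obtain ⟨l, hl, hlK, hlC⟩ : ∃ l : ℝ, 0 < l ∧ l * K ≤ 1 ∧ l * (K ^ 2 * C) ≤ η / 4 := by
    refine ⟨min (1 / K) (η / 4 / (K ^ 2 * C)), by positivity, ?_, ?_⟩
    · rw [← le_div_iff₀ hKpos]; exact min_le_left _ _
    · rw [← le_div_iff₀ (by positivity)]; exact min_le_right _ _
  have hlim : Tendsto (fun n : ℕ => 1 - Real.exp (-(l * (η / 4) * n))) atTop (nhds 1) := by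
    have h1 : Tendsto (fun n : ℕ => l * (η / 4) * (n : ℝ)) atTop atTop :=
      Tendsto.const_mul_atTop (by positivity) tendsto_natCast_atTop_atTop
    have h2 := (Real.tendsto_exp_neg_atTop_nhds_zero.comp h1).const_sub 1
    simpa using h2
  refine tendsto_of_tendsto_of_tendsto_of_le_of_le' hlim tendsto_const_nhds ?_
    (Eventually.of_forall fun n => Pr_le_one _)
  have hev := tendsto_natCast_atTop_atTop (R := ℝ) |>.eventually_ge_atTop (6 * C + 4 + 2 * C / η)
  filter_upwards [hev] with n hnn
  have hCη : 0 ≤ 2 * C / η := by positivity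
  have hn4 : (4 : ℝ) ≤ n := by linarith
  have hn1 : 1 ≤ n := by
    have : (1 : ℝ) ≤ n := by linarith
    exact_mod_cast this
  obtain ⟨m, hm⟩ : ∃ m, m = ⌊C * (n : ℝ)⌋₊ := ⟨_, rfl⟩
  rw [← hm]
  have hmle : (m : ℝ) ≤ C * n := by rw [hm]; exact Nat.floor_le (by positivity)
  have hmge : C * n < m + 1 := by rw [hm]; exact Nat.lt_floor_add_one _
  have hN := two_numEdges n
  have hm3 : 3 * (m : ℝ) ≤ numEdges n := by nlinarith
  have htail := mart_tail hn1 (st n) δ hδ.le hm3 l hl (by rw [← hK]; exact hlK) (η / 2 * n)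
  rw [← hK] at htail
  have hexp : Real.exp (l ^ 2 * K ^ 2 * m - l * (η / 2 * n)) ≤ Real.exp (-(l * (η / 4) * n)) := by
    apply Real.exp_le_exp.2
    have h1 : l ^ 2 * K ^ 2 * m ≤ l ^ 2 * K ^ 2 * (C * n) := by gcongr
    have h2 : l ^ 2 * K ^ 2 * (C * n) ≤ l * n * (η / 4) := by
      calc l ^ 2 * K ^ 2 * (C * n) = l * n * (l * (K ^ 2 * C)) := by ring
        _ ≤ _ := by gcongr
    linarith
  refine le_trans (sub_le_sub_left (htail.trans hexp) 1) ?_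
  apply Pr_ge
  intro σ hσ
  by_contra hcon
  apply hσ
  push Not at hcon
  by_cases hY : ∀ i ≤ m, ((badY (st n) σ i).card : ℝ) ≤ δ * n
  · right
    have hinv := invariant (st n) δ σ m hY m le_rfl
    have hb : ((bIso (st n) σ m).card : ℝ) ≤ (iso σ m).card + (badY (st n) σ m).card := by
      exact_mod_cast bIso_card (st n) σ m
    have hYm := hY m le_rfl
    have hend := mart_end (st n) δ m σ
    rw [mart_zero hn1] at hcon
    have hexp2 : Real.exp (-(2 * m / n)) ≤ 2 * Real.exp (-C) := by
      have h1 : -(2 * (m : ℝ) / n) ≤ 1 / 2 + -C := by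
        have h2 : C ≤ (m + 1) / n := by rw [le_div_iff₀ (by linarith)]; exact hmge.le
        have h3 : 2 * ((1 : ℝ) / n) ≤ 1 / 2 := by
          rw [← mul_div_assoc, div_le_div_iff₀ (by linarith) (by norm_num)]; linarith
        have h4 : ((m : ℝ) + 1) / n = m / n + 1 / n := by ring
        have h5 : 2 * (m : ℝ) / n = 2 * (m / n) := by ring
        rw [h5]; linarith
      refine (Real.exp_le_exp.2 h1).trans ?_
      rw [Real.exp_add]
      refine mul_le_mul_of_nonneg_right ?_ (Real.exp_pos _).le
      have h6 : Real.exp (1 / 2) ^ 2 = Real.exp 1 := by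
        rw [← Real.exp_nat_mul]; norm_num
      have h7 := Real.exp_one_lt_d9
      nlinarith [Real.exp_pos (1 / 2)]
    have hexp3 := mul_le_mul_of_nonneg_right hexp2 (by linarith : (0 : ℝ) ≤ n)
    have hmn : (m : ℝ) * (1 / n) ≤ C := by
      rw [mul_one_div, div_le_iff₀ (by linarith)]; exact hmle
    have hηn : C ≤ η / 2 * n := by
      have : 2 * C / η ≤ n := by linarith
      rw [div_le_iff₀ hη] at this
      linarith
    have hmd : (m : ℝ) * (3 * δ) ≤ C * n * (3 * δ) := by gcongr
    have hpos : 0 ≤ C * n * (3 * δ) := by positivity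
    linarith
  · left
    push Not at hY
    exact hY

end RGP
end
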